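/- arXiv:1808.06513 — 3 statements merged into one kernel-verified Lean document; each statement's English description precedes it below -/
import Mathlib

section
/- Let C ⊆ G be horizontally convex and assume the Hörmander condition. Let P = (z,t) belong to the closure of C and suppose there is ξ ∈ Z such that (z,t)·(ξ,0) ∈ Int(C). Then there exists ε > 0 such that for every (z',t') in the closure of C with Euclidean distance |(z',t') − (z,t)| < ε and for every s ∈ (0,1], the left-translated box (z',t')·(sξ,0)·{(w,τ) ∈ Z × T : |w| < εs and |τ| < ε²s²} is contained in C (here |·| denotes the Euclidean norm on Z and on T, and the translated box is the set of all (z',t')·(sξ,0)·(w,τ) with (w,τ) as indicated). -/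
/- Step-two Carnot group `G = Z × T` with `Z = ℝ^m`, `T = ℝ^ℓ` and group law
`(z,t)·(ζ,τ) = (z+ζ, t+τ+Q(z,ζ))` for a bilinear skew-symmetric `Q`. -/

noncomputable section

/-- The first layer `Z = ℝ^m`. -/
abbrev ZS (m : ℕ) := EuclideanSpace ℝ (Fin m)

/-- The second layer `T = ℝ^ℓ`. -/
abbrev TS (l : ℕ) := EuclideanSpace ℝ (Fin l)

/-- Group law of the step-two group. -/
def gmul {m l : ℕ} (Q : ZS m →ₗ[ℝ] ZS m →ₗ[ℝ] TS l)
    (p q : ZS m × TS l) : ZS m × TS l :=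
  (p.1 + q.1, p.2 + q.2 + Q p.1 q.1)

/-- Horizontal convexity. -/
def HConvex {m l : ℕ} (Q : ZS m →ₗ[ℝ] ZS m →ₗ[ℝ] TS l)
    (C : Set (ZS m × TS l)) : Prop :=
  ∀ p : ZS m × TS l, ∀ u : ZS m, p ∈ C → gmul Q p (u, 0) ∈ C →
    ∀ s : ℝ, 0 ≤ s → s ≤ 1 → gmul Q p (s • u, 0) ∈ C

lemma icp_self {l : ℕ} {x : TS l} (h : x = -x) : x = 0 := by
  have h2 : (2 : ℝ) • x = 0 := by
    rw [two_smul]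
    nth_rewrite 2 [h]
    exact add_neg_cancel x
  exact (smul_eq_zero.mp h2).resolve_left two_ne_zero

lemma icp_four {m l : ℕ} (Q : ZS m →ₗ[ℝ] ZS m →ₗ[ℝ] TS l)
    (hskew : ∀ z ζ : ZS m, Q z ζ = - Q ζ z) (p : ZS m × TS l) (ξ a b : ZS m) (h : ℝ) :
    gmul Q (gmul Q (gmul Q (gmul Q p (h • (ξ + a), 0)) (h • (ξ + b), 0)) (h • (ξ + -a), 0))
      (h • (ξ + -b), 0)
    = gmul Q p ((4 * h) • ξ, (h ^ 2) • ((-4 : ℝ) • Q ξ a + (-4 : ℝ) • Q ξ b + (2 : ℝ) • Q a b)) := by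
  have h0 : ∀ x, Q x x = 0 := fun x => icp_self (hskew x x)
  have h1 : Q a ξ = - Q ξ a := hskew _ _
  have h2 : Q b ξ = - Q ξ b := hskew _ _
  have h3 : Q b a = - Q a b := hskew _ _
  ext1
  · simp only [gmul]; module
  · simp only [gmul, map_add, map_smul, map_neg, LinearMap.add_apply, LinearMap.smul_apply,
      LinearMap.neg_apply, h0, h1, h2, h3]
    module

lemma icp_eight {m l : ℕ} (Q : ZS m →ₗ[ℝ] ZS m →ₗ[ℝ] TS l)
    (hskew : ∀ z ζ : ZS m, Q z ζ = - Q ζ z) (p : ZS m × TS l) (ξ a b : ZS m) (h : ℝ) :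
    gmul Q (gmul Q (gmul Q (gmul Q (gmul Q (gmul Q (gmul Q (gmul Q p
      (h • (ξ + a), 0)) (h • (ξ + b), 0)) (h • (ξ + -a), 0)) (h • (ξ + -b), 0))
      (h • (ξ + -a), 0)) (h • (ξ + -b), 0)) (h • (ξ + a), 0)) (h • (ξ + b), 0)
    = gmul Q p ((8 * h) • ξ, (4 * h ^ 2) • Q a b) := by
  rw [icp_four Q hskew]
  have := icp_four Q hskew (gmul Q p ((4 * h) • ξ,
    (h ^ 2) • ((-4 : ℝ) • Q ξ a + (-4 : ℝ) • Q ξ b + (2 : ℝ) • Q a b))) ξ (-a) (-b) h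
  rw [neg_neg, neg_neg] at this
  rw [this]
  have h0 : Q ξ ξ = 0 := icp_self (hskew ξ ξ)
  ext1
  · simp only [gmul]; module
  · simp only [gmul, map_add, map_smul, map_neg, LinearMap.add_apply, LinearMap.smul_apply,
      LinearMap.neg_apply, h0]
    module

lemma icp_cont {m l : ℕ} (Q : ZS m →ₗ[ℝ] ZS m →ₗ[ℝ] TS l) :
    Continuous fun x : (ZS m × TS l) × (ZS m × TS l) => gmul Q x.1 x.2 := by
  have hQ : Continuous fun x : ZS m × ZS m => Q x.1 x.2 := by
    let Q' : ZS m →L[ℝ] ZS m →L[ℝ] TS l :=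
      LinearMap.toContinuousLinearMap ((LinearMap.toContinuousLinearMap (𝕜 := ℝ)
        (E := ZS m) (F' := TS l)).toLinearMap ∘ₗ Q)
    have : (fun x : ZS m × ZS m => Q x.1 x.2) = fun x => Q' x.1 x.2 := rfl
    rw [this]
    fun_prop
  unfold gmul
  have h2 : Continuous fun x : (ZS m × TS l) × (ZS m × TS l) => Q x.1.1 x.2.1 :=
    hQ.comp (by fun_prop : Continuous fun x : (ZS m × TS l) × (ZS m × TS l) => (x.1.1, x.2.1))
  fun_prop

/-- base step -/
lemma icp_base {m l : ℕ} (Q : ZS m →ₗ[ℝ] ZS m →ₗ[ℝ] TS l)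
    (C : Set (ZS m × TS l)) (hC : HConvex Q C) (P : ZS m × TS l)
    (ξ : ZS m) (hQint : gmul Q P (ξ, 0) ∈ interior C) :
    ∃ ρ > (0 : ℝ), ∀ p ∈ C, dist p P < ρ → ∀ w : ZS m, ‖w‖ < ρ →
      ∀ r : ℝ, 0 ≤ r → r ≤ 1 → gmul Q p (r • (ξ + w), 0) ∈ C := by
  have hc : Continuous fun x : (ZS m × TS l) × ZS m => gmul Q x.1 (ξ + x.2, 0) :=
    (icp_cont Q).comp (by fun_prop :
      Continuous fun x : (ZS m × TS l) × ZS m => (x.1, ((ξ + x.2, 0) : ZS m × TS l)))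
  have hU := (isOpen_interior (s := C)).preimage hc
  obtain ⟨ρ, hρ, hb⟩ := Metric.isOpen_iff.mp hU (P, 0) (by simpa using hQint)
  refine ⟨ρ, hρ, fun p hp hd w hw r h0 h1 => hC p _ hp ?_ r h0 h1⟩
  have : (p, w) ∈ Metric.ball (P, (0 : ZS m)) ρ := by
    have e1 : dist w 0 < ρ := by rw [dist_zero_right]; exact hw
    exact max_lt hd e1
  exact interior_subset (hb this)

lemma icp_near {m l : ℕ} (Q : ZS m →ₗ[ℝ] ZS m →ₗ[ℝ] TS l) (P : ZS m × TS l)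
    (ξ : ZS m) (ρ : ℝ) (hρ : 0 < ρ) :
    ∃ ρ1 > (0 : ℝ), ∀ p, dist p P < ρ1 → ∀ w : ZS m, dist w 0 < ρ1 →
      ∀ h : ℝ, dist h 0 < ρ1 → dist (gmul Q p (h • (ξ + w), 0)) P < ρ := by
  have hc : Continuous fun x : (ZS m × TS l) × (ZS m × ℝ) =>
      gmul Q x.1 (x.2.2 • (ξ + x.2.1), 0) :=
    (icp_cont Q).comp (by fun_prop :
      Continuous fun x : (ZS m × TS l) × (ZS m × ℝ) =>
        (x.1, ((x.2.2 • (ξ + x.2.1), 0) : ZS m × TS l)))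
  have hz : gmul Q P ((0 : ℝ) • (ξ + 0), 0) = P := by simp [gmul]
  obtain ⟨ρ1, hρ1, hb1⟩ := Metric.continuous_iff.mp hc (P, (0, 0)) ρ hρ
  refine ⟨ρ1, hρ1, fun p hp w hw h hh => ?_⟩
  have := hb1 (p, (w, h)) (by
    rw [Prod.dist_eq, Prod.dist_eq]
    exact max_lt hp (max_lt hw hh))
  rw [hz] at this
  exact this

lemma icp_step {m l : ℕ} (Q : ZS m →ₗ[ℝ] ZS m →ₗ[ℝ] TS l)
    (C : Set (ZS m × TS l)) (hC : HConvex Q C) (P : ZS m × TS l)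
    (ξ : ZS m) (hQint : gmul Q P (ξ, 0) ∈ interior C) (ρ : ℝ) (hρ : 0 < ρ) :
    ∃ ρ' > (0 : ℝ), ρ' ≤ ρ ∧ ∀ p ∈ C, dist p P < ρ' → ∀ w : ZS m, ‖w‖ < ρ' →
      ∀ h : ℝ, 0 ≤ h → h < ρ' → gmul Q p (h • (ξ + w), 0) ∈ C ∧
        dist (gmul Q p (h • (ξ + w), 0)) P < ρ := by
  obtain ⟨ρ0, hρ0, hb⟩ := icp_base Q C hC P ξ hQint
  obtain ⟨ρ1, hρ1, hb1⟩ := icp_near Q P ξ ρ hρ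
  obtain ⟨r, hr, a0, a1, a2, a3⟩ : ∃ r > (0 : ℝ), r ≤ ρ0 ∧ r ≤ ρ1 ∧ r ≤ ρ ∧ r ≤ 1 :=
    ⟨min (min ρ0 ρ1) (min ρ 1), lt_min (lt_min hρ0 hρ1) (lt_min hρ one_pos),
      (min_le_left _ _).trans (min_le_left _ _), (min_le_left _ _).trans (min_le_right _ _),
      (min_le_right _ _).trans (min_le_left _ _), (min_le_right _ _).trans (min_le_right _ _)⟩
  refine ⟨r, hr, a2, fun p hp hd w hw h h0 h1 => ⟨?_, ?_⟩⟩
  · exact hb p hp (hd.trans_le a0) w (hw.trans_le a0) h h0 (h1.le.trans a3)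
  · refine hb1 p (hd.trans_le a1) w ?_ h ?_
    · rw [dist_zero_right]; exact hw.trans_le a1
    · rw [dist_zero_right, Real.norm_eq_abs, abs_of_nonneg h0]; exact h1.trans_le a1

lemma icp_oct {m l : ℕ} (Q : ZS m →ₗ[ℝ] ZS m →ₗ[ℝ] TS l)
    (hskew : ∀ z ζ : ZS m, Q z ζ = - Q ζ z)
    (C : Set (ZS m × TS l)) (hC : HConvex Q C) (P : ZS m × TS l)
    (ξ : ZS m) (hQint : gmul Q P (ξ, 0) ∈ interior C) (ρ : ℝ) (hρ : 0 < ρ) :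
    ∃ ρ' > (0 : ℝ), ρ' ≤ ρ ∧ ∀ p ∈ C, dist p P < ρ' → ∀ a b : ZS m, ‖a‖ < ρ' → ‖b‖ < ρ' →
      ∀ h : ℝ, 0 ≤ h → h < ρ' → gmul Q p ((8 * h) • ξ, (4 * h ^ 2) • Q a b) ∈ C ∧
        dist (gmul Q p ((8 * h) • ξ, (4 * h ^ 2) • Q a b)) P < ρ := by
  have S := icp_step Q C hC P ξ hQint
  obtain ⟨r1, h1, l1, s1⟩ := S ρ hρ
  obtain ⟨r2, h2, l2, s2⟩ := S r1 h1
  obtain ⟨r3, h3, l3, s3⟩ := S r2 h2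
  obtain ⟨r4, h4, l4, s4⟩ := S r3 h3
  obtain ⟨r5, h5, l5, s5⟩ := S r4 h4
  obtain ⟨r6, h6, l6, s6⟩ := S r5 h5
  obtain ⟨r7, h7, l7, s7⟩ := S r6 h6
  obtain ⟨r8, h8, l8, s8⟩ := S r7 h7
  refine ⟨r8, h8, by linarith, fun p hp hd a b ha hb h hh hr => ?_⟩
  rw [← icp_eight Q hskew]
  have ha' : ‖-a‖ < r8 := by rwa [norm_neg]
  have hb' : ‖-b‖ < r8 := by rwa [norm_neg]
  have t8 := s8 p hp hd a ha h hh hr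
  have t7 := s7 _ t8.1 t8.2 b (by linarith) h hh (by linarith)
  have t6 := s6 _ t7.1 t7.2 (-a) (by linarith) h hh (by linarith)
  have t5 := s5 _ t6.1 t6.2 (-b) (by linarith) h hh (by linarith)
  have t4 := s4 _ t5.1 t5.2 (-a) (by linarith) h hh (by linarith)
  have t3 := s3 _ t4.1 t4.2 (-b) (by linarith) h hh (by linarith)
  have t2 := s2 _ t3.1 t3.2 a (by linarith) h hh (by linarith)
  exact s1 _ t2.1 t2.2 b (by linarith) h hh (by linarith)

lemma icp_chain {m l : ℕ} (Q : ZS m →ₗ[ℝ] ZS m →ₗ[ℝ] TS l)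
    (hskew : ∀ z ζ : ZS m, Q z ζ = - Q ζ z)
    (C : Set (ZS m × TS l)) (hC : HConvex Q C) (P : ZS m × TS l)
    (ξ : ZS m) (hQint : gmul Q P (ξ, 0) ∈ interior C) (ρ : ℝ) (hρ : 0 < ρ) (n : ℕ) :
    ∃ ρ' > (0 : ℝ), ρ' ≤ ρ ∧ ∀ p ∈ C, dist p P < ρ' → ∀ a b : Fin n → ZS m,
      (∀ i, ‖a i‖ < ρ') → (∀ i, ‖b i‖ < ρ') →
      ∀ h : ℝ, 0 ≤ h → h < ρ' →
        gmul Q p ((8 * n * h) • ξ, (4 * h ^ 2) • ∑ i, Q (a i) (b i)) ∈ C ∧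
        dist (gmul Q p ((8 * n * h) • ξ, (4 * h ^ 2) • ∑ i, Q (a i) (b i))) P < ρ := by
  induction n generalizing ρ with
  | zero => exact ⟨ρ, hρ, le_rfl, fun p hp hd a b _ _ h _ _ => by simpa [gmul] using ⟨hp, hd⟩⟩
  | succ n ih =>
    obtain ⟨r1, h1, l1, s1⟩ := icp_oct Q hskew C hC P ξ hQint ρ hρ
    obtain ⟨r2, h2, l2, s2⟩ := ih r1 h1
    refine ⟨r2, h2, by linarith, fun p hp hd a b ha hb h hh hr => ?_⟩
    have t := s2 p hp hd (fun i => a i.castSucc) (fun i => b i.castSucc) (fun i => ha _)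
      (fun i => hb _) h hh hr
    have t' := s1 _ t.1 t.2 (a (Fin.last n)) (b (Fin.last n)) (by linarith [ha (Fin.last n)])
      (by linarith [hb (Fin.last n)]) h hh (by linarith)
    have e : gmul Q (gmul Q p ((8 * n * h) • ξ, (4 * h ^ 2) • ∑ i : Fin n, Q (a i.castSucc) (b i.castSucc)))
        ((8 * h) • ξ, (4 * h ^ 2) • Q (a (Fin.last n)) (b (Fin.last n)))
        = gmul Q p ((8 * (n + 1 : ℕ) * h) • ξ, (4 * h ^ 2) • ∑ i, Q (a i) (b i)) := by
      have h0 : Q ξ ξ = 0 := icp_self (hskew ξ ξ)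
      rw [Fin.sum_univ_castSucc]
      push_cast
      ext1
      · simp only [gmul]; module
      · simp only [gmul, map_add, map_smul, LinearMap.add_apply, LinearMap.smul_apply, h0]
        module
    rw [e] at t'
    exact t'

lemma icp_span {m l : ℕ} (Q : ZS m →ₗ[ℝ] ZS m →ₗ[ℝ] TS l)
    (hHorm : Submodule.span ℝ (Set.range fun zz : ZS m × ZS m => Q zz.1 zz.2) = ⊤) :
    ∃ n : ℕ, ∀ δ > (0 : ℝ), ∃ η > (0 : ℝ), ∀ τ : TS l, ‖τ‖ < η →
      ∃ a b : Fin n → ZS m, (∀ i, ‖a i‖ < δ) ∧ (∀ i, ‖b i‖ < δ) ∧ ∑ i, Q (a i) (b i) = τ := by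
  obtain ⟨f, hf, hs, -⟩ := Submodule.exists_fun_fin_finrank_span_eq ℝ
    (Set.range fun zz : ZS m × ZS m => Q zz.1 zz.2)
  replace hs := hs.trans hHorm
  generalize Module.finrank ℝ (Submodule.span ℝ
    (Set.range fun zz : ZS m × ZS m => Q zz.1 zz.2)) = n at f hf hs
  choose g hg using hf
  refine ⟨n, fun δ hδ => ?_⟩
  let L := Fintype.linearCombination ℝ f
  have hL : Function.Surjective L := by
    rw [← LinearMap.range_eq_top, Fintype.range_linearCombination, hs]
  have ho : IsOpenMap L := L.isOpenMap_of_finiteDimensional hL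
  set X := ∑ i, ‖(g i).1‖
  set Y := ∑ i, ‖(g i).2‖
  have hX : ∀ i, ‖(g i).1‖ ≤ X := fun i =>
    Finset.single_le_sum (f := fun i => ‖(g i).1‖) (fun _ _ => norm_nonneg _) (Finset.mem_univ i)
  have hY : ∀ i, ‖(g i).2‖ ≤ Y := fun i =>
    Finset.single_le_sum (f := fun i => ‖(g i).2‖) (fun _ _ => norm_nonneg _) (Finset.mem_univ i)
  have hX0 : 0 ≤ X := Finset.sum_nonneg fun _ _ => norm_nonneg _
  have hY0 : 0 ≤ Y := Finset.sum_nonneg fun _ _ => norm_nonneg _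
  set κ := δ / (1 + Y)
  have hκ : 0 < κ := by positivity
  have hκ' : κ * (1 + Y) = δ := by simp only [κ]; field_simp
  set ν := δ * κ / (1 + X)
  have hν : 0 < ν := by positivity
  have hν' : ν * (1 + X) = δ * κ := by simp only [ν]; field_simp
  have hO := ho _ (Metric.isOpen_ball (x := (0 : Fin n → ℝ)) (ε := ν))
  obtain ⟨η, hη, hb⟩ := Metric.isOpen_iff.mp hO 0 ⟨0, by simpa using hν, map_zero L⟩
  refine ⟨η, hη, fun τ hτ => ?_⟩
  obtain ⟨c, hc, hcτ⟩ := hb (show τ ∈ Metric.ball 0 η by simpa using hτ)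
  have hci : ∀ i, |c i| < ν := fun i =>
    lt_of_le_of_lt (norm_le_pi_norm c i) (by simpa using hc)
  refine ⟨fun i => (c i / κ) • (g i).1, fun i => κ • (g i).2, fun i => ?_, fun i => ?_, ?_⟩
  · rw [norm_smul, Real.norm_eq_abs, abs_div, abs_of_pos hκ, div_mul_eq_mul_div, div_lt_iff₀ hκ]
    have := mul_le_mul (hci i).le (hX i) (norm_nonneg _) hν.le
    linarith
  · rw [norm_smul, Real.norm_eq_abs, abs_of_pos hκ]
    have := mul_le_mul_of_nonneg_left (hY i) hκ.le
    linarith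
  · rw [← hcτ]
    simp only [L, Fintype.linearCombination_apply]
    refine Finset.sum_congr rfl fun i _ => ?_
    rw [← hg i]
    simp only [map_smul, LinearMap.smul_apply, smul_smul]
    congr 1
    field_simp

lemma icp_mem {m l : ℕ}
    (Q : ZS m →ₗ[ℝ] ZS m →ₗ[ℝ] TS l)
    (hskew : ∀ z ζ : ZS m, Q z ζ = - Q ζ z)
    (hHorm : Submodule.span ℝ (Set.range fun zz : ZS m × ZS m => Q zz.1 zz.2) = ⊤)
    (C : Set (ZS m × TS l)) (hC : HConvex Q C) (P : ZS m × TS l)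
    (ξ : ZS m) (hQint : gmul Q P (ξ, 0) ∈ interior C) :
    ∃ ε > (0 : ℝ), ∀ p ∈ C, dist p P < ε →
      ∀ s : ℝ, 0 < s → s ≤ 1 →
      ∀ w : ZS m, ∀ τ : TS l, ‖w‖ < ε * s → ‖τ‖ < ε ^ 2 * s ^ 2 →
        gmul Q (gmul Q p (s • ξ, 0)) (w, τ) ∈ C := by
  obtain ⟨ρ0, hρ0, hb⟩ := icp_base Q C hC P ξ hQint
  obtain ⟨n, hn⟩ := icp_span Q hHorm
  obtain ⟨ρ1, hρ1, -, hch⟩ := icp_chain Q hskew C hC P ξ hQint ρ0 hρ0 n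
  obtain ⟨η, hη, hs⟩ := hn ρ1 hρ1
  set K := ‖LinearMap.toContinuousLinearMap (Q ξ)‖
  have hK0 : 0 ≤ K := norm_nonneg _
  have hK : ∀ w, ‖Q ξ w‖ ≤ K * ‖w‖ := fun w =>
    (LinearMap.toContinuousLinearMap (Q ξ)).le_opNorm w
  obtain ⟨c, hc, hcρ, hcn⟩ : ∃ c > (0 : ℝ), c < ρ1 ∧ 8 * n * c ≤ 1 / 2 := by
    refine ⟨min (ρ1 / 2) (1 / (16 * (n + 1))), by positivity,
      lt_of_le_of_lt (min_le_left _ _) (by linarith), ?_⟩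
    have : min (ρ1 / 2) (1 / (16 * ((n : ℝ) + 1))) ≤ 1 / (16 * (n + 1)) := min_le_right _ _
    calc 8 * (n : ℝ) * _ ≤ 8 * n * (1 / (16 * (n + 1))) := by gcongr
      _ ≤ 1 / 2 := by
        rw [mul_one_div, div_le_div_iff₀ (by positivity) (by norm_num)]
        linarith
  obtain ⟨ε, hε, e1, e2, e3, e4⟩ : ∃ ε > (0 : ℝ), ε ≤ 1 ∧ 2 * ε ≤ ρ0 ∧ ε ≤ ρ1 ∧
      (1 + K) * ε ≤ 4 * c ^ 2 * η := by
    refine ⟨min (min 1 (ρ0 / 2)) (min ρ1 (4 * c ^ 2 * η / (1 + K))), by positivity,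
      (min_le_left _ _).trans (min_le_left _ _), ?_, (min_le_right _ _).trans (min_le_left _ _), ?_⟩
    · have : min (min 1 (ρ0 / 2)) (min ρ1 (4 * c ^ 2 * η / (1 + K))) ≤ ρ0 / 2 :=
        (min_le_left _ _).trans (min_le_right _ _)
      linarith
    · rw [mul_comm, ← le_div_iff₀ (by positivity)]
      exact (min_le_right _ _).trans (min_le_right _ _)
  refine ⟨ε, hε, fun p hp hd s hs0 hs1 w τ hw hτ => ?_⟩
  set r := s - 8 * n * (c * s) with hr
  have hr1 : s / 2 ≤ r := by nlinarith
  have hr2 : r ≤ s := by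
    have : 0 ≤ 8 * n * (c * s) := by positivity
    linarith
  have hr0 : 0 < r := by linarith
  obtain ⟨a, b, ha, hb', hab⟩ := hs ((1 / (4 * (c * s) ^ 2)) • (τ + r • Q ξ w)) (by
    rw [norm_smul, Real.norm_eq_abs, abs_of_pos (by positivity), one_div, inv_mul_lt_iff₀ (by positivity)]
    calc ‖τ + r • Q ξ w‖ ≤ ‖τ‖ + ‖r • Q ξ w‖ := norm_add_le _ _
      _ = ‖τ‖ + r * ‖Q ξ w‖ := by rw [norm_smul, Real.norm_eq_abs, abs_of_pos hr0]
      _ ≤ ‖τ‖ + s * (K * (ε * s)) := by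
        have := hK w
        gcongr
        exact this.trans (by gcongr)
      _ < ε ^ 2 * s ^ 2 + s * (K * (ε * s)) := by linarith
      _ = (ε * ε + K * ε) * s ^ 2 := by ring
      _ ≤ (1 * ε + K * ε) * s ^ 2 := by gcongr
      _ = ((1 + K) * ε) * s ^ 2 := by ring
      _ ≤ (4 * c ^ 2 * η) * s ^ 2 := by gcongr
      _ = 4 * (c * s) ^ 2 * η := by ring)
  have t := hch p hp (by linarith) a b ha hb' (c * s) (by positivity) (by nlinarith)
  have t' := hb _ t.1 t.2 (r⁻¹ • w) (by
    rw [norm_smul, Real.norm_eq_abs, abs_of_pos (by positivity), inv_mul_lt_iff₀ hr0]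
    nlinarith) r hr0.le (by linarith)
  rw [hab, smul_smul, mul_one_div_cancel (by positivity), one_smul, smul_add,
    smul_inv_smul₀ hr0.ne'] at t'
  convert t' using 1
  have h0 : Q ξ ξ = 0 := icp_self (hskew ξ ξ)
  have hsr : s = r + 8 * n * (c * s) := by rw [hr]; ring
  generalize 8 * n * (c * s) = q at *
  clear_value r
  subst hsr
  ext1
  · simp only [gmul]; module
  · simp only [gmul, map_add, map_smul, LinearMap.add_apply, LinearMap.smul_apply, h0]
    module

/-- **Inner cone property for convex sets in two-step Carnot groups (box form).** -/
theorem inner_cone_property_box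
    (m l : ℕ) (hm : 0 < m) (hl : 0 < l)
    (Q : ZS m →ₗ[ℝ] ZS m →ₗ[ℝ] TS l)
    (hskew : ∀ z ζ : ZS m, Q z ζ = - Q ζ z)
    (hHorm : Submodule.span ℝ (Set.range fun zz : ZS m × ZS m => Q zz.1 zz.2) = ⊤)
    (C : Set (ZS m × TS l)) (hC : HConvex Q C)
    (z : ZS m) (t : TS l) (hP : (z, t) ∈ closure C)
    (ξ : ZS m) (hQint : gmul Q (z, t) (ξ, 0) ∈ interior C) :
    ∃ ε > (0 : ℝ), ∀ z' : ZS m, ∀ t' : TS l, (z', t') ∈ closure C →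
      Real.sqrt (‖z' - z‖ ^ 2 + ‖t' - t‖ ^ 2) < ε →
      ∀ s : ℝ, 0 < s → s ≤ 1 →
      ∀ w : ZS m, ∀ τ : TS l, ‖w‖ < ε * s → ‖τ‖ < ε ^ 2 * s ^ 2 →
        gmul Q (gmul Q (z', t') (s • ξ, 0)) (w, τ) ∈ C := by
  obtain ⟨ε, hε, H⟩ := icp_mem Q hskew hHorm C hC (z, t) ξ hQint
  refine ⟨ε, hε, fun z' t' hcl hd s hs0 hs1 w τ hw hτ => ?_⟩
  have hd' : dist (z', t') (z, t) < ε := by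
    rw [Prod.dist_eq, dist_eq_norm, dist_eq_norm]
    refine max_lt (lt_of_le_of_lt (Real.le_sqrt_of_sq_le ?_) hd)
      (lt_of_le_of_lt (Real.le_sqrt_of_sq_le ?_) hd)
    · simpa using sq_nonneg ‖t' - t‖
    · simpa using sq_nonneg ‖z' - z‖
  set Y := gmul Q (gmul Q (z', t') (s • ξ, 0)) (w, τ) with hY
  -- the residual displacement seen from a nearby base point
  let D : ZS m × TS l → ZS m × TS l := fun p =>
    gmul Q (-(gmul Q p (s • ξ, 0))) Y
  have hDc : Continuous D := by
    have c1 : Continuous fun p : ZS m × TS l => gmul Q p (s • ξ, 0) :=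
      (icp_cont Q).comp (by fun_prop :
        Continuous fun p : ZS m × TS l => (p, ((s • ξ, 0) : ZS m × TS l)))
    exact (icp_cont Q).comp (by fun_prop :
      Continuous fun p : ZS m × TS l => (-(gmul Q p (s • ξ, 0)), Y))
  have h0 : ∀ x, Q x x = 0 := fun x => icp_self (hskew x x)
  have key : ∀ x y, gmul Q (-x) (gmul Q x y) = y := fun x y => by
    ext1
    · simp [gmul]
    · simp [gmul, h0]; abel
  have key' : ∀ x y, gmul Q x (gmul Q (-x) y) = y := fun x y => by
    have := key (-x) y
    rwa [neg_neg] at this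
  have hD0 : D (z', t') = (w, τ) := key _ _
  have hopen : IsOpen {p : ZS m × TS l | dist p (z, t) < ε ∧ ‖(D p).1‖ < ε * s ∧
      ‖(D p).2‖ < ε ^ 2 * s ^ 2} := by
    have o1 : IsOpen {p : ZS m × TS l | dist p (z, t) < ε} := Metric.isOpen_ball
    have o2 : IsOpen {p : ZS m × TS l | ‖(D p).1‖ < ε * s} :=
      isOpen_lt hDc.fst.norm continuous_const
    have o3 : IsOpen {p : ZS m × TS l | ‖(D p).2‖ < ε ^ 2 * s ^ 2} :=
      isOpen_lt hDc.snd.norm continuous_const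
    exact o1.inter (o2.inter o3)
  obtain ⟨p, ⟨h1, h2, h3⟩, hpC⟩ := mem_closure_iff.mp hcl _ hopen
    ⟨hd', by rw [hD0]; exact hw, by rw [hD0]; exact hτ⟩
  have := H p hpC h1 s hs0 hs1 (D p).1 (D p).2 h2 h3
  rwa [Prod.mk.eta, key'] at this
end
end

section
/- Let C ⊆ G be horizontally convex and assume the Hörmander condition. Let P = (z,t) belong to the closure of C and suppose there is ξ ∈ Z such that (z,t)·(ξ,0) ∈ Int(C). Then the whole segment of points (z,t)·(sξ,0) with s ∈ (0,1] is contained in Int(C). -/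
/- Step-two Carnot group `G = Z × T` with `Z = ℝ^m`, `T = ℝ^ℓ` and group law
`(z,t)·(ζ,τ) = (z+ζ, t+τ+Q(z,ζ))` for a bilinear skew-symmetric `Q`. -/

noncomputable section

open Filter Topology

theorem aux_contQ {m l : ℕ} (Q : ZS m →ₗ[ℝ] ZS m →ₗ[ℝ] TS l) :
    Continuous fun p : ZS m × ZS m => Q p.1 p.2 := by
  let Q' : ZS m →L[ℝ] ZS m →L[ℝ] TS l :=
    LinearMap.toContinuousLinearMap (LinearMap.toContinuousLinearMap.toLinearMap ∘ₗ Q)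
  have h : (fun p : ZS m × ZS m => Q p.1 p.2) = fun p => Q' p.1 p.2 := by
    funext p; rfl
  rw [h]
  fun_prop

theorem aux_contg {m l : ℕ} (Q : ZS m →ₗ[ℝ] ZS m →ₗ[ℝ] TS l) {X : Type*} [TopologicalSpace X]
    {f g : X → ZS m × TS l} (hf : Continuous f) (hg : Continuous g) :
    Continuous fun x => gmul Q (f x) (g x) := by
  have h : Continuous fun x => Q (f x).1 (g x).1 :=
    (aux_contQ Q).comp (hf.fst.prodMk hg.fst)
  unfold gmul
  exact (hf.fst.add hg.fst).prodMk ((hf.snd.add hg.snd).add h)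

theorem aux_self {m l : ℕ} {Q : ZS m →ₗ[ℝ] ZS m →ₗ[ℝ] TS l}
    (hskew : ∀ z ζ : ZS m, Q z ζ = - Q ζ z) (x : ZS m) : Q x x = 0 := by
  have h := hskew x x
  have h2 : (2 : ℝ) • Q x x = 0 := by
    rw [two_smul]; nth_rewrite 2 [h]; exact add_neg_cancel _
  exact (smul_eq_zero.mp h2).resolve_left two_ne_zero

theorem aux_line {m l : ℕ} {Q : ZS m →ₗ[ℝ] ZS m →ₗ[ℝ] TS l}
    (hskew : ∀ z ζ : ZS m, Q z ζ = - Q ζ z) (P : ZS m × TS l) (ξ : ZS m) (a b : ℝ) :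
    gmul Q (gmul Q P (a • ξ, 0)) (b • ξ, 0) = gmul Q P ((a + b) • ξ, 0) := by
  have h := aux_self hskew ξ
  ext1
  · simp only [gmul]; module
  · simp only [gmul, map_add, map_smul, LinearMap.add_apply, LinearMap.smul_apply, h]; module

theorem aux_step {m l : ℕ} {Q : ZS m →ₗ[ℝ] ZS m →ₗ[ℝ] TS l}
    (hskew : ∀ z ζ : ZS m, Q z ζ = - Q ζ z)
    {C : Set (ZS m × TS l)} (hC : HConvex Q C) {P : ZS m × TS l} {ξ : ZS m}
    (hint : gmul Q P (ξ, 0) ∈ interior C) {X : Type*} [TopologicalSpace X]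
    (f : X → ZS m × TS l) (a : X → ZS m) (x0 : X) (hf : Continuous f) (ha : Continuous a)
    (σ c : ℝ) (hc : 0 < c) (hσ : σ + c ≤ 1)
    (hf0 : f x0 = gmul Q P (σ • ξ, 0)) (ha0 : a x0 = 0) :
    ∀ᶠ x in 𝓝 x0, f x ∈ C → gmul Q (f x) (c • ξ + a x, 0) ∈ C := by
  have hcont : Continuous fun x => gmul Q (f x) (((1 - σ) / c) • (c • ξ + a x), 0) :=
    aux_contg Q hf (by fun_prop)
  have h0 : gmul Q (f x0) (((1 - σ) / c) • (c • ξ + a x0), 0) = gmul Q P (ξ, 0) := by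
    rw [hf0, ha0, add_zero, smul_smul, div_mul_cancel₀ _ hc.ne', aux_line hskew]
    simp
  have hev := hcont.continuousAt.eventually_mem (x := x0)
    (s := C) (by rw [h0]; exact mem_interior_iff_mem_nhds.mp hint)
  filter_upwards [hev] with x hx hfx
  have hpos : 0 < 1 - σ := by linarith
  have := hC _ _ hfx hx (c / (1 - σ)) (by positivity) (by rw [div_le_one hpos]; linarith)
  rw [smul_smul, show c / (1 - σ) * ((1 - σ) / c) = 1 by field_simp, one_smul] at this
  exact this

theorem aux_four {m l : ℕ} {Q : ZS m →ₗ[ℝ] ZS m →ₗ[ℝ] TS l}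
    (hskew : ∀ z ζ : ZS m, Q z ζ = - Q ζ z) (R : ZS m × TS l) (ξ x y : ZS m) (c : ℝ) :
    gmul Q (gmul Q (gmul Q (gmul Q R (c • ξ + x, 0)) (c • ξ + ((-2 : ℝ) • x + y), 0))
      (c • ξ + (x + (-2 : ℝ) • y), 0)) (c • ξ + y, 0)
      = gmul Q R ((4 * c) • ξ, (2 : ℝ) • Q x y) := by
  ext1
  · simp only [gmul]; module
  · simp only [gmul, map_add, map_smul, LinearMap.add_apply, LinearMap.smul_apply,
      aux_self hskew, hskew x ξ, hskew y ξ, hskew y x]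
    module

def AuxGood {m l : ℕ} (Q : ZS m →ₗ[ℝ] ZS m →ₗ[ℝ] TS l) (C : Set (ZS m × TS l))
    (P : ZS m × TS l) (ξ : ZS m) (φ : TS l →L[ℝ] TS l) : Prop :=
  ∀ σ c : ℝ, 0 < c → σ + c ≤ 1 → ∀ᶠ q : (ZS m × TS l) × TS l in 𝓝 (gmul Q P (σ • ξ, 0), 0),
    q.1 ∈ C → gmul Q q.1 (c • ξ, φ q.2) ∈ C

theorem aux_good_add {m l : ℕ} {Q : ZS m →ₗ[ℝ] ZS m →ₗ[ℝ] TS l}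
    (hskew : ∀ z ζ : ZS m, Q z ζ = - Q ζ z)
    {C : Set (ZS m × TS l)} {P : ZS m × TS l} {ξ : ZS m} {φ ψ : TS l →L[ℝ] TS l}
    (h1 : AuxGood Q C P ξ φ) (h2 : AuxGood Q C P ξ ψ) : AuxGood Q C P ξ (φ + ψ) := by
  intro σ c hc hσ
  have e1 := h1 σ (c / 2) (by linarith) (by linarith)
  have e2 := h2 (σ + c / 2) (c / 2) (by linarith) (by linarith)
  have hcont : Continuous fun q : (ZS m × TS l) × TS l =>
      (gmul Q q.1 ((c / 2) • ξ, φ q.2), q.2) :=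
    (aux_contg Q (by fun_prop) (by fun_prop)).prodMk (by fun_prop)
  have ht := hcont.tendsto (gmul Q P (σ • ξ, 0), 0)
  simp only [map_zero, aux_line hskew] at ht
  filter_upwards [e1, ht.eventually e2] with q hq1 hq2 hq
  have := hq2 (hq1 hq)
  convert this using 1
  ext1
  · simp only [gmul]; module
  · simp only [gmul, map_add, map_smul, LinearMap.add_apply, LinearMap.smul_apply,
      aux_self hskew, ContinuousLinearMap.add_apply]
    module

theorem aux_good_Q {m l : ℕ} {Q : ZS m →ₗ[ℝ] ZS m →ₗ[ℝ] TS l}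
    (hskew : ∀ z ζ : ZS m, Q z ζ = - Q ζ z)
    {C : Set (ZS m × TS l)} (hC : HConvex Q C) {P : ZS m × TS l} {ξ : ZS m}
    (hint : gmul Q P (ξ, 0) ∈ interior C) (ρ : TS l →L[ℝ] ℝ) (x y : ZS m) :
    AuxGood Q C P ξ (ρ.smulRight (Q x y)) := by
  intro σ c hc hσ
  let A : (ZS m × TS l) × TS l → ZS m := fun q =>
    (√(ρ q.2 / 2) + √(-(ρ q.2 / 2))) • x
  let B : (ZS m × TS l) × TS l → ZS m := fun q =>
    (√(ρ q.2 / 2) - √(-(ρ q.2 / 2))) • y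
  have hA : Continuous A := by fun_prop
  have hB : Continuous B := by fun_prop
  set x0 : (ZS m × TS l) × TS l := (gmul Q P (σ • ξ, 0), 0) with hx0
  have hA0 : A x0 = 0 := by simp [A, x0]
  have hB0 : B x0 = 0 := by simp [B, x0]
  let f0 : (ZS m × TS l) × TS l → ZS m × TS l := fun q => q.1
  let f1 := fun q => gmul Q (f0 q) ((c / 4) • ξ + A q, 0)
  let f2 := fun q => gmul Q (f1 q) ((c / 4) • ξ + ((-2 : ℝ) • A q + B q), 0)
  let f3 := fun q => gmul Q (f2 q) ((c / 4) • ξ + (A q + (-2 : ℝ) • B q), 0)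
  have c0 : Continuous f0 := by fun_prop
  have c1 : Continuous f1 := aux_contg Q c0 (by fun_prop)
  have c2 : Continuous f2 := aux_contg Q c1 (by fun_prop)
  have c3 : Continuous f3 := aux_contg Q c2 (by fun_prop)
  have v0 : f0 x0 = gmul Q P (σ • ξ, 0) := rfl
  have v1 : f1 x0 = gmul Q P ((σ + c / 4) • ξ, 0) := by
    simp only [f1, v0, hA0, add_zero, aux_line hskew]
  have v2 : f2 x0 = gmul Q P ((σ + c / 4 + c / 4) • ξ, 0) := by
    simp only [f2, v1, hA0, hB0, smul_zero, add_zero, aux_line hskew]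
  have v3 : f3 x0 = gmul Q P ((σ + c / 4 + c / 4 + c / 4) • ξ, 0) := by
    simp only [f3, v2, hA0, hB0, smul_zero, add_zero, aux_line hskew]
  have e0 := aux_step hskew hC hint f0 A x0 c0 hA σ (c / 4) (by linarith) (by linarith) v0 hA0
  have e1 := aux_step hskew hC hint f1 (fun q => (-2 : ℝ) • A q + B q) x0 c1 (by fun_prop) _
    (c / 4) (by linarith) (by linarith) v1 (by simp [hA0, hB0])
  have e2 := aux_step hskew hC hint f2 (fun q => A q + (-2 : ℝ) • B q) x0 c2 (by fun_prop) _
    (c / 4) (by linarith) (by linarith) v2 (by simp [hA0, hB0])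
  have e3 := aux_step hskew hC hint f3 B x0 c3 hB _
    (c / 4) (by linarith) (by linarith) v3 hB0
  filter_upwards [e0, e1, e2, e3] with q h0 h1 h2 h3 hq
  have h := h3 (h2 (h1 (h0 hq)))
  simp only [f3, f2, f1, f0] at h
  rw [aux_four hskew] at h
  have hr : (√(ρ q.2 / 2) + √(-(ρ q.2 / 2))) * (√(ρ q.2 / 2) - √(-(ρ q.2 / 2))) = ρ q.2 / 2 := by
    rcases le_total 0 (ρ q.2 / 2) with h | h
    · rw [Real.sqrt_eq_zero_of_nonpos (x := -(ρ q.2 / 2)) (by linarith), add_zero, sub_zero,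
        Real.mul_self_sqrt h]
    · rw [Real.sqrt_eq_zero_of_nonpos h, zero_add, zero_sub, mul_neg,
        Real.mul_self_sqrt (by linarith), neg_neg]
  convert h using 3
  · congr 1; ring
  · simp only [A, B, map_smul, LinearMap.smul_apply, ContinuousLinearMap.smulRight_apply, smul_smul]
    congr 1
    linear_combination (-2) * hr

theorem aux_good_id {m l : ℕ} {Q : ZS m →ₗ[ℝ] ZS m →ₗ[ℝ] TS l}
    (hskew : ∀ z ζ : ZS m, Q z ζ = - Q ζ z)
    (hHorm : Submodule.span ℝ (Set.range fun zz : ZS m × ZS m => Q zz.1 zz.2) = ⊤)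
    {C : Set (ZS m × TS l)} (hC : HConvex Q C) {P : ZS m × TS l} {ξ : ZS m}
    (hint : gmul Q P (ξ, 0) ∈ interior C) :
    AuxGood Q C P ξ (ContinuousLinearMap.id ℝ (TS l)) := by
  have hz : AuxGood Q C P ξ 0 := by
    have := aux_good_Q hskew hC hint 0 0 0
    simpa using this
  have hw : ∀ w : TS l, ∀ ρ : TS l →L[ℝ] ℝ, AuxGood Q C P ξ (ρ.smulRight w) := by
    intro w
    have hmem : w ∈ Submodule.span ℝ (Set.range fun zz : ZS m × ZS m => Q zz.1 zz.2) := by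
      rw [hHorm]; trivial
    induction hmem using Submodule.span_induction with
    | mem w hw => obtain ⟨zz, rfl⟩ := hw; exact fun ρ => aux_good_Q hskew hC hint ρ _ _
    | zero =>
      intro ρ
      rwa [show ρ.smulRight (0 : TS l) = 0 by ext; simp]
    | add u v _ _ hu hv =>
      intro ρ
      rw [show ρ.smulRight (u + v) = ρ.smulRight u + ρ.smulRight v by ext; simp [mul_add]]
      exact aux_good_add hskew (hu ρ) (hv ρ)
    | smul a u _ hu =>
      intro ρ
      rw [show ρ.smulRight (a • u) = (a • ρ).smulRight u by ext; simp; ring]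
      exact hu _
  have hsum : ∀ s : Finset (Fin l), AuxGood Q C P ξ
      (∑ i ∈ s, (EuclideanSpace.proj i : TS l →L[ℝ] ℝ).smulRight (EuclideanSpace.single i (1:ℝ))) := by
    intro s
    induction s using Finset.induction_on with
    | empty => simpa using hz
    | insert a s ha ih =>
      rw [Finset.sum_insert ha]
      exact aux_good_add hskew (hw _ _) ih
  convert hsum Finset.univ using 1
  ext v i
  simp [ContinuousLinearMap.sum_apply, Finset.sum_apply, Pi.single_apply]

/-- If `(z,t)` lies in the closure of the convex set `C` and `(z,t)·(ξ,0) ∈ Int(C)`,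
then the open segment `(z,t)·(sξ,0)`, `s ∈ (0,1]`, is contained in `Int(C)`. -/
theorem segment_in_interior
    (m l : ℕ) (hm : 0 < m) (hl : 0 < l)
    (Q : ZS m →ₗ[ℝ] ZS m →ₗ[ℝ] TS l)
    (hskew : ∀ z ζ : ZS m, Q z ζ = - Q ζ z)
    (hHorm : Submodule.span ℝ (Set.range fun zz : ZS m × ZS m => Q zz.1 zz.2) = ⊤)
    (C : Set (ZS m × TS l)) (hC : HConvex Q C)
    (z : ZS m) (t : TS l) (hP : (z, t) ∈ closure C)
    (ξ : ZS m) (hQint : gmul Q (z, t) (ξ, 0) ∈ interior C) :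
    ∀ s : ℝ, 0 < s → s ≤ 1 → gmul Q (z, t) (s • ξ, 0) ∈ interior C := by
  intro s hs hs1
  have hgood := aux_good_id hskew hHorm hC hQint 0 (s / 2) (by linarith) (by linarith)
  let Y := (ZS m × TS l) × (ZS m × TS l)
  let a : Y → ZS m := fun q => q.2.1 - s • ξ - q.1.1
  let τ : Y → TS l := fun q => q.2.2 - q.1.2 - Q q.1.1 (s • ξ + a q) - (s / 2) • Q ξ (a q)
  have ha : Continuous a := by fun_prop
  have hτ : Continuous τ := by
    have h1 : Continuous fun q : Y => Q q.1.1 (s • ξ + a q) :=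
      (aux_contQ Q).comp (by fun_prop : Continuous fun q : Y => (q.1.1, s • ξ + a q))
    have h2 : Continuous fun q : Y => Q ξ (a q) :=
      (aux_contQ Q).comp (by fun_prop : Continuous fun q : Y => (ξ, a q))
    have h3 : Continuous fun q : Y => q.2.2 - q.1.2 := continuous_snd.snd.sub continuous_fst.snd
    exact (h3.sub h1).sub (h2.const_smul (s / 2))
  set x0 : Y := ((z, t), gmul Q (z, t) (s • ξ, 0)) with hx0
  have ha0 : a x0 = 0 := by simp [a, x0, gmul]
  have hτ0 : τ x0 = 0 := by simp only [τ, ha0]; simp [x0, gmul]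
  have hzero : gmul Q (z, t) ((0 : ℝ) • ξ, 0) = (z, t) := by simp [gmul]
  have ht : Tendsto (fun q : Y => (q.1, τ q)) (𝓝 x0) (𝓝 (gmul Q (z, t) ((0:ℝ) • ξ, 0), 0)) := by
    have := (by fun_prop : Continuous fun q : Y => (q.1, τ q)).tendsto x0
    rwa [hτ0, show x0.1 = gmul Q (z, t) ((0:ℝ) • ξ, 0) from hzero.symm] at this
  have e1 := ht.eventually hgood
  have e2 := aux_step hskew hC hQint (fun q : Y => gmul Q q.1 ((s / 2) • ξ, τ q)) a x0
    (aux_contg Q (by fun_prop) (by fun_prop)) ha (s / 2) (s / 2) (by linarith) (by linarith)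
    (by simp only [hτ0]; rfl) ha0
  have e3 : ∀ᶠ q : Y in 𝓝 x0, q.1 ∈ C → q.2 ∈ C := by
    filter_upwards [e1, e2] with q h1 h2 hq
    have h := h2 (h1 hq)
    convert h using 1
    ext1
    · simp only [gmul, a]; module
    · simp only [gmul, τ, map_add, map_smul, LinearMap.add_apply, LinearMap.smul_apply,
        aux_self hskew, ContinuousLinearMap.id_apply]
      module
  rw [hx0, nhds_prod_eq] at e3
  obtain ⟨U, hU, V, hV, hUV⟩ := Filter.eventually_prod_iff.mp e3
  obtain ⟨R, hRU, hRC⟩ := mem_closure_iff_nhds.mp hP _ hU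
  rw [mem_interior_iff_mem_nhds]
  filter_upwards [hV] with X hX
  exact hUV hRU hX hRC
end
end

section
/- Let E ⊆ ℝ⁴ = ℍ×ℝ be precisely monotone with E ≠ ∅ and E ≠ ℝ⁴. Then there exists an affine hyperplane Σ = {v ∈ ℝ⁴ : ⟨v,ν⟩ = c} (for some nonzero ν ∈ ℝ⁴ and some c ∈ ℝ) such that Int(E) and Int(ℝ⁴∖E) are precisely the two connected components {v : ⟨v,ν⟩ > c} and {v : ⟨v,ν⟩ < c} of ℝ⁴∖Σ (in some order). -/
/- The group `ℍ×ℝ`: `ℝ⁴` with coordinates `(x,y,u,t)` and law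
`(x,y,u,t)·(x',y',u',t') = (x+x', y+y', u+u', t+t'+2(yx'−y'x))`. -/

noncomputable section

/-- Group law of `ℍ×ℝ` on `ℝ⁴`. -/
def hmul (p q : Fin 4 → ℝ) : Fin 4 → ℝ :=
  ![p 0 + q 0, p 1 + q 1, p 2 + q 2, p 3 + q 3 + 2 * (p 1 * q 0 - q 1 * p 0)]

/-- Horizontal convexity in `ℍ×ℝ`. -/
def HRConvex (C : Set (Fin 4 → ℝ)) : Prop :=
  ∀ p ∈ C, ∀ a b c : ℝ, hmul p ![a, b, c, 0] ∈ C →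
    ∀ s : ℝ, 0 ≤ s → s ≤ 1 → hmul p ![s * a, s * b, s * c, 0] ∈ C

/-- Precise monotonicity in `ℍ×ℝ`. -/
def PreciselyMonotone (E : Set (Fin 4 → ℝ)) : Prop := HRConvex E ∧ HRConvex Eᶜ

/-- Points of the Heisenberg group. -/
abbrev P3 := ℝ × ℝ × ℝ

/-- Alignment form. -/
def al (p q : P3) : ℝ := q.2.2 - p.2.2 - 2 * (p.2.1 * q.1 - p.1 * q.2.1)

/-- Point on the line through two points. -/
def pt (p q : P3) (s : ℝ) : P3 :=
  (p.1 + s * (q.1 - p.1), p.2.1 + s * (q.2.1 - p.2.1), p.2.2 + s * (q.2.2 - p.2.2))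

/-- Horizontal move. -/
def mv (p : P3) (a b : ℝ) : P3 :=
  (p.1 + a, p.2.1 + b, p.2.2 + 2 * (p.2.1 * a - b * p.1))

def HC (C : Set P3) : Prop :=
  ∀ p ∈ C, ∀ q ∈ C, al p q = 0 → ∀ s : ℝ, 0 ≤ s → s ≤ 1 → pt p q s ∈ C

def Mono (E : Set P3) : Prop := HC E ∧ HC Eᶜ

theorem Mono.compl {E : Set P3} (h : Mono E) : Mono Eᶜ := ⟨h.2, by rw [compl_compl]; exact h.1⟩

theorem P3.ext {p q : P3} (h0 : p.1 = q.1) (h1 : p.2.1 = q.2.1) (h2 : p.2.2 = q.2.2) : p = q :=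
  Prod.ext h0 (Prod.ext h1 h2)

theorem al_mv (p : P3) (a b : ℝ) : al p (mv p a b) = 0 := by
  simp only [al, mv]; ring

theorem al_symm {p q : P3} (h : al p q = 0) : al q p = 0 := by
  simp only [al] at *; linarith

theorem al_pt (p q : P3) (s s' : ℝ) : al (pt p q s) (pt p q s') = (s' - s) * al p q := by
  simp only [al, pt]; ring

theorem pt_mv (p : P3) (a b s : ℝ) : pt p (mv p a b) s = mv p (s * a) (s * b) := by
  apply P3.ext <;> simp only [pt, mv] <;> ring

theorem mv_of_al {p q : P3} (h : al p q = 0) : q = mv p (q.1 - p.1) (q.2.1 - p.2.1) := by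
  apply P3.ext <;> simp only [al, mv] at * <;> linarith

theorem continuous_pt : Continuous (fun z : P3 × P3 × ℝ => pt z.1 z.2.1 z.2.2) := by
  unfold pt; fun_prop

theorem continuous_mv (a b : ℝ) : Continuous (fun p : P3 => mv p a b) := by
  unfold mv; fun_prop

/-- If `c` is between `e` and `m` (weakly), `e ∈ S`, `m ∈ S`, then `c ∈ S`. -/
theorem HC.between {S : Set P3} (hS : HC S) {c m : P3} (hcm : al c m = 0) {k : ℝ} (hk : 0 ≤ k)
    (he : pt c m (-k) ∈ S) (hm : m ∈ S) : c ∈ S := by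
  have h := hS _ he _ hm (by
    have := al_pt c m (-k) 1
    rw [hcm] at this
    have h2 : pt c m 1 = m := by apply P3.ext <;> simp only [pt] <;> ring
    rw [h2] at this; simpa using this) (k / (1 + k)) (by positivity)
    (by rw [div_le_one (by positivity)]; linarith)
  have h3 : pt (pt c m (-k)) m (k / (1 + k)) = c := by
    have : (1 + k) ≠ 0 := by positivity
    apply P3.ext <;> simp only [pt] <;> field_simp <;> ring
  rwa [h3] at h

/-- the auxiliary point aligned with both. -/
def mid (c r : P3) : P3 :=
  let dl := al c r / 2
  let D := (r.1 - c.1) ^ 2 + (r.2.1 - c.2.1) ^ 2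
  let v0 := - (dl / D) * (r.2.1 - c.2.1)
  let v1 := (dl / D) * (r.1 - c.1)
  ((c.1 + r.1) / 2 + v0, (c.2.1 + r.2.1) / 2 + v1,
    (c.2.2 + r.2.2) / 2 + ((c.2.1 + r.2.1) * v0 - (c.1 + r.1) * v1))

theorem mid_al {c r : P3} (hD : (r.1 - c.1) ^ 2 + (r.2.1 - c.2.1) ^ 2 ≠ 0) :
    al c (mid c r) = 0 ∧ al r (mid c r) = 0 := by
  constructor
  · simp only [al, mid]
    field_simp
    ring
  · simp only [al, mid]
    field_simp
    ring

theorem mid_cont {c r : P3} (hD : (r.1 - c.1) ^ 2 + (r.2.1 - c.2.1) ^ 2 ≠ 0) :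
    ContinuousAt (fun z : P3 × P3 => mid z.1 z.2) (c, r) := by
  unfold mid al
  simp only
  refine ContinuousAt.prodMk ?_ (ContinuousAt.prodMk ?_ ?_) <;>
  fun_prop (disch := exact hD)

theorem D_ne {c r : P3} (h : al c r = 0) (hne : c ≠ r) :
    (r.1 - c.1) ^ 2 + (r.2.1 - c.2.1) ^ 2 ≠ 0 := by
  intro h0
  apply hne
  have h1 : r.1 - c.1 = 0 := by nlinarith [sq_nonneg (r.1 - c.1), sq_nonneg (r.2.1 - c.2.1)]
  have h2 : r.2.1 - c.2.1 = 0 := by nlinarith [sq_nonneg (r.1 - c.1), sq_nonneg (r.2.1 - c.2.1)]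
  have e1 : c.1 = r.1 := by linarith
  have e2 : c.2.1 = r.2.1 := by linarith
  refine P3.ext e1 e2 ?_
  simp only [al, e1, e2] at h
  linarith

theorem keyK {E : Set P3} (hE : Mono E) {c r : P3} (h : al c r = 0) (hne : c ≠ r) {μ : ℝ}
    (hμ : 0 < μ)
    (hit1 : ∀ᶠ z in nhds (pt c r (-μ), c), ∃ s : ℝ, 0 ≤ s ∧ s ≤ 1 ∧ pt z.1 z.2 s ∈ E)
    (hit2 : ∀ᶠ z in nhds (pt c r (-μ), pt c r (1 / 2)),
      ∃ s : ℝ, 0 ≤ s ∧ s ≤ 1 ∧ pt z.1 z.2 s ∈ E)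
    (hc : c ∈ closure Eᶜ) (hr : r ∈ closure E) : False := by
  have hD := D_ne h hne
  have hm0 : mid c r = pt c r (1 / 2) := by
    apply P3.ext <;> simp only [mid, pt, h] <;> ring
  have hmc := mid_cont hD
  have hz : (c, r) ∈ closure (Eᶜ ×ˢ E) := by rw [closure_prod_eq]; exact ⟨hc, hr⟩
  have hfst : ContinuousAt (fun z : P3 × P3 => z.1) (c, r) := continuousAt_fst
  have hsnd : ContinuousAt (fun z : P3 × P3 => z.2) (c, r) := continuousAt_snd
  have hd1 : ContinuousAt (fun z : P3 × P3 => (pt z.1 (mid z.1 z.2) (-(2 * μ)), z.1)) (c, r) := by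
    refine ContinuousAt.prodMk ?_ hfst
    exact (continuous_pt.continuousAt (x := (c, mid c r, -(2*μ)))).comp
      (f := fun z : P3 × P3 => (z.1, mid z.1 z.2, -(2 * μ)))
      (hfst.prodMk (hmc.prodMk continuousAt_const))
  have hd2 : ContinuousAt (fun z : P3 × P3 => (pt (mid z.1 z.2) z.2 (-(1 + 2 * μ)), mid z.1 z.2))
      (c, r) := by
    refine ContinuousAt.prodMk ?_ hmc
    exact (continuous_pt.continuousAt (x := (mid c r, r, -(1 + 2*μ)))).comp
      (f := fun z : P3 × P3 => (mid z.1 z.2, z.2, -(1 + 2 * μ)))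
      (hmc.prodMk (hsnd.prodMk continuousAt_const))
  have e1 : pt c (mid c r) (-(2 * μ)) = pt c r (-μ) := by
    rw [hm0]; apply P3.ext <;> simp only [pt] <;> ring
  have e2 : pt (mid c r) r (-(1 + 2 * μ)) = pt c r (-μ) := by
    rw [hm0]; apply P3.ext <;> simp only [pt] <;> ring
  have t1 := hd1.tendsto.eventually (p := fun z => ∃ s : ℝ, 0 ≤ s ∧ s ≤ 1 ∧ pt z.1 z.2 s ∈ E)
    (by simpa only [e1] using hit1)
  have t2 := hd2.tendsto.eventually (p := fun z => ∃ s : ℝ, 0 ≤ s ∧ s ≤ 1 ∧ pt z.1 z.2 s ∈ E)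
    (by simp only [e2]; simpa only [hm0] using hit2)
  have t3 : ∀ᶠ z : P3 × P3 in nhds (c, r), (z.2.1 - z.1.1) ^ 2 + (z.2.2.1 - z.1.2.1) ^ 2 ≠ 0 := by
    have : ContinuousAt (fun z : P3 × P3 => (z.2.1 - z.1.1) ^ 2 + (z.2.2.1 - z.1.2.1) ^ 2) (c, r) := by
      fun_prop
    exact this.eventually_ne hD
  obtain ⟨⟨c', r'⟩, ⟨⟨s1, h10, h11, h1E⟩, ⟨s2, h20, h21, h2E⟩, hD'⟩, hc', hr'⟩ :=
    ((mem_closure_iff_frequently.1 hz).and_eventually (t1.and (t2.and t3))).exists.imp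
      (fun _ hx => And.intro hx.2 hx.1)
  simp only at h1E h2E hD' hc' hr'
  obtain ⟨a1, a2⟩ := mid_al hD'
  have hmC : mid c' r' ∉ E := by
    intro hmE
    refine hc' (hE.1.between a1 (k := 2 * μ * (1 - s1)) (mul_nonneg (by positivity) (by linarith)) ?_ hmE)
    convert h1E using 1
    apply P3.ext <;> simp only [pt] <;> ring
  apply hmC
  refine hE.1.between (al_symm a2) (k := (1 + 2 * μ) * (1 - s2))
    (mul_nonneg (by positivity) (by linarith)) ?_ hr'
  convert h2E using 1
  apply P3.ext <;> simp only [pt] <;> ring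

theorem beyond {E : Set P3} (hE : Mono E) {q c : P3} (h : al q c = 0) (hq : q ∈ interior E)
    (hc : c ∈ closure Eᶜ) {ρ : ℝ} (hρ : 0 < ρ) : pt q c (1 + ρ) ∈ interior Eᶜ := by
  rw [interior_compl]
  intro hr
  have hqc : q ≠ c := by
    rintro rfl
    rw [closure_compl] at hc
    exact hc hq
  have hq' : pt c (pt q c (1 + ρ)) (-(1 / ρ)) = q := by
    apply P3.ext <;> simp only [pt] <;> field_simp <;> ring
  have hit : ∀ x : P3, ∀ᶠ z in nhds (pt c (pt q c (1 + ρ)) (-(1 / ρ)), x),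
      ∃ s : ℝ, 0 ≤ s ∧ s ≤ 1 ∧ pt z.1 z.2 s ∈ E := by
    intro x
    rw [hq']
    have : ∀ᶠ z : P3 × P3 in nhds (q, x), z.1 ∈ E :=
      continuousAt_fst.eventually (p := fun y => y ∈ E) (mem_interior_iff_mem_nhds.1 hq)
    filter_upwards [this] with z hz
    refine ⟨0, le_rfl, zero_le_one, ?_⟩
    convert hz using 1
    apply P3.ext <;> simp only [pt] <;> ring
  refine keyK hE (c := c) (r := pt q c (1 + ρ)) ?_ ?_ (μ := 1 / ρ) (by positivity) (hit _) (hit _) hc hr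
  · have := al_pt q c 1 (1 + ρ)
    rw [h, show pt q c 1 = c by apply P3.ext <;> simp only [pt] <;> ring] at this
    simpa using this
  · intro heq
    apply hqc
    have g1 := congrArg Prod.fst heq
    have g2 := congrArg (fun z : P3 => z.2.1) heq
    have g3 := congrArg (fun z : P3 => z.2.2) heq
    simp only [pt] at g1 g2 g3
    apply P3.ext
    · have : ρ * (c.1 - q.1) = 0 := by linarith
      rcases mul_eq_zero.1 this with h | h <;> linarith
    · have : ρ * (c.2.1 - q.2.1) = 0 := by linarith
      rcases mul_eq_zero.1 this with h | h <;> linarith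
    · have : ρ * (c.2.2 - q.2.2) = 0 := by linarith
      rcases mul_eq_zero.1 this with h | h <;> linarith

/-- The affine maps preserving alignment. -/
def phi (p : P3) (α β γ δ : ℝ) (z : P3) : P3 :=
  (p.1 + (α * z.1 + β * z.2.1), p.2.1 + (γ * z.1 + δ * z.2.1),
    p.2.2 + (α * δ - β * γ) * z.2.2
      + 2 * (p.2.1 * (α * z.1 + β * z.2.1) - p.1 * (γ * z.1 + δ * z.2.1)))

theorem al_phi (p : P3) (α β γ δ : ℝ) (z w : P3) :
    al (phi p α β γ δ z) (phi p α β γ δ w) = (α * δ - β * γ) * al z w := by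
  simp only [al, phi]; ring

theorem pt_phi (p : P3) (α β γ δ : ℝ) (z w : P3) (s : ℝ) :
    phi p α β γ δ (pt z w s) = pt (phi p α β γ δ z) (phi p α β γ δ w) s := by
  apply P3.ext <;> simp only [pt, phi] <;> ring

theorem HC.phi {C : Set P3} (h : HC C) (p : P3) (α β γ δ : ℝ) : HC (phi p α β γ δ ⁻¹' C) := by
  intro z hz w hw hzw s h0 h1
  show _ ∈ C
  rw [pt_phi]
  exact h _ hz _ hw (by rw [al_phi, hzw, mul_zero]) s h0 h1

theorem Mono.phi {E : Set P3} (h : Mono E) (p : P3) (α β γ δ : ℝ) :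
    Mono (phi p α β γ δ ⁻¹' E) := ⟨h.1.phi p α β γ δ, h.2.phi p α β γ δ⟩

theorem phi_cont (p : P3) (α β γ δ : ℝ) : Continuous (phi p α β γ δ) := by
  unfold phi; fun_prop

/-- `phi` as a homeomorphism. -/
def phiH (p : P3) (α β γ δ : ℝ) (h : α * δ - β * γ ≠ 0) : P3 ≃ₜ P3 where
  toFun := phi p α β γ δ
  invFun z := ((δ * (z.1 - p.1) - β * (z.2.1 - p.2.1)) / (α * δ - β * γ),
    (α * (z.2.1 - p.2.1) - γ * (z.1 - p.1)) / (α * δ - β * γ),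
    (z.2.2 - p.2.2 - 2 * (p.2.1 * (z.1 - p.1) - p.1 * (z.2.1 - p.2.1))) / (α * δ - β * γ))
  left_inv z := by
    apply P3.ext <;> simp only [phi] <;> rw [div_eq_iff h] <;> ring
  right_inv z := by
    have hi := mul_inv_cancel₀ h
    apply P3.ext <;> simp only [phi, div_eq_mul_inv]
    · linear_combination (z.1 - p.1) * hi
    · linear_combination (z.2.1 - p.2.1) * hi
    · linear_combination (z.2.2 - p.2.2) * hi
  continuous_toFun := phi_cont ..
  continuous_invFun := by fun_prop

theorem phi_closure {p : P3} {α β γ δ : ℝ} (h : α * δ - β * γ ≠ 0) {S : Set P3}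
    (hS : closure S = Set.univ) : closure (phi p α β γ δ ⁻¹' S) = Set.univ := by
  have := (phiH p α β γ δ h).preimage_closure S
  rw [hS, Set.preimage_univ] at this
  exact this.symm

/-- The quadric. -/
def FF (z : P3) : ℝ := 2 * z.1 * z.2.1 + z.2.2 * (1 - 2 * z.2.1)

theorem FF_cont : Continuous FF := by unfold FF; fun_prop

theorem comb_lt {a b k s : ℝ} (h0 : 0 ≤ s) (h1 : s ≤ 1) (ha : a < k) (hb : b < k) :
    a + s * (b - a) < k := by
  rcases eq_or_lt_of_le h0 with rfl | h0
  · linarith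
  nlinarith [mul_pos h0 (sub_pos.2 hb), mul_nonneg (sub_nonneg.2 h1) (sub_pos.2 ha).le]

theorem lt_comb {a b k s : ℝ} (h0 : 0 ≤ s) (h1 : s ≤ 1) (ha : k < a) (hb : k < b) :
    k < a + s * (b - a) := by
  have := comb_lt h0 h1 (neg_lt_neg ha) (neg_lt_neg hb)
  linarith

theorem hit_quadric {E : Set P3} (hE : HC E) {N : ℝ} (hN : 0 ≤ N)
    (h1 : ∀ s > N, ((s, 0, 0) : P3) ∈ E) (h2 : ∀ s < -N, ((s, 1, 2 * s) : P3) ∈ E)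
    {d c : P3} (hd : FF d < 0) (hc : 0 < FF c)
    (d1 : 0 < d.2.1) (d2 : d.2.1 < 1) (d3 : d.2.2 < - (2 * N))
    (c1 : 0 < c.2.1) (c2 : c.2.1 < 1) (c3 : c.2.2 < - (2 * N)) :
    ∃ s : ℝ, 0 ≤ s ∧ s ≤ 1 ∧ pt d c s ∈ E := by
  have hcont : ContinuousOn (fun s : ℝ => FF (pt d c s)) (Set.Icc 0 1) := by
    apply Continuous.continuousOn
    unfold FF pt; fun_prop
  have e0 : pt d c 0 = d := by apply P3.ext <;> simp only [pt] <;> ring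
  have e1 : pt d c 1 = c := by apply P3.ext <;> simp only [pt] <;> ring
  obtain ⟨s, ⟨hs0, hs1⟩, hs⟩ := intermediate_value_Icc zero_le_one hcont
    (show (0 : ℝ) ∈ Set.Icc (FF (pt d c 0)) (FF (pt d c 1)) by
      rw [e0, e1]; exact ⟨hd.le, hc.le⟩)
  refine ⟨s, hs0, hs1, ?_⟩
  simp only at hs
  have hy0 : 0 < (pt d c s).2.1 := lt_comb hs0 hs1 d1 c1
  have hy1 : (pt d c s).2.1 < 1 := comb_lt hs0 hs1 d2 c2
  have ht : (pt d c s).2.2 < -(2 * N) := comb_lt hs0 hs1 d3 c3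
  generalize pt d c s = w at *
  obtain ⟨x, y, t⟩ := w
  simp only [FF] at hs hy0 hy1 ht
  have hsN : -t / (2 * y) > N := by
    rw [gt_iff_lt, lt_div_iff₀ (by positivity)]; nlinarith
  have := hE _ (h1 _ hsN) _ (h2 (-(-t / (2 * y))) (by linarith)) (by simp only [al]; ring)
    y hy0.le hy1.le
  convert this using 1
  apply P3.ext
  · simp only [pt]; field_simp; linarith
  · simp only [pt]; ring
  · simp only [pt]; field_simp; ring

theorem std_link {E : Set P3} (hE : Mono E) (hcE : closure E = Set.univ)
    (hcC : closure Eᶜ = Set.univ) {N : ℝ}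
    (h1 : ∀ s > N, ((s, 0, 0) : P3) ∈ E) (h2 : ∀ s < -N, ((s, 1, 2 * s) : P3) ∈ E) : False := by
  obtain ⟨M, hM0, hMN⟩ : ∃ M : ℝ, 0 ≤ M ∧ N ≤ M := ⟨max N 0, le_max_right _ _, le_max_left _ _⟩
  have h1' : ∀ s > M, ((s, 0, 0) : P3) ∈ E := fun s hs => h1 s (by linarith)
  have h2' : ∀ s < -M, ((s, 1, 2 * s) : P3) ∈ E := fun s hs => h2 s (by linarith)
  have hit : ∀ d c : P3, FF d < 0 → 0 < FF c → 0 < d.2.1 → d.2.1 < 1 → d.2.2 < - (2 * M) →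
     0 < c.2.1 → c.2.1 < 1 → c.2.2 < - (2 * M) →
     ∀ᶠ z in nhds (d, c), ∃ s : ℝ, 0 ≤ s ∧ s ≤ 1 ∧ pt z.1 z.2 s ∈ E := by
    intro d c a1 a2 a3 a4 a5 a6 a7 a8
    have lt1 : ∀ f g : P3 × P3 → ℝ, Continuous f → Continuous g → f (d, c) < g (d, c) →
        ∀ᶠ z in nhds (d, c), f z < g z := fun f g hf hg h =>
      hf.continuousAt.eventually_lt hg.continuousAt h
    filter_upwards [lt1 (fun z => FF z.1) (fun _ => 0) (FF_cont.comp continuous_fst) (by fun_prop) a1,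
      lt1 (fun _ => 0) (fun z => FF z.2) (by fun_prop) (FF_cont.comp continuous_snd) a2,
      lt1 (fun _ => 0) (fun z => z.1.2.1) (by fun_prop) (by fun_prop) a3,
      lt1 (fun z => z.1.2.1) (fun _ => 1) (by fun_prop) (by fun_prop) a4,
      lt1 (fun z => z.1.2.2) (fun _ => - (2 * M)) (by fun_prop) (by fun_prop) a5,
      lt1 (fun _ => 0) (fun z => z.2.2.1) (by fun_prop) (by fun_prop) a6,
      lt1 (fun z => z.2.2.1) (fun _ => 1) (by fun_prop) (by fun_prop) a7,
      lt1 (fun z => z.2.2.2) (fun _ => - (2 * M)) (by fun_prop) (by fun_prop) a8]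
      with z b1 b2 b3 b4 b5 b6 b7 b8
    exact hit_quadric hE.1 hM0 h1' h2' b1 b2 b3 b4 b5 b6 b7 b8
  refine keyK hE (c := (1, 1 / 2, -(2 * M + 5) + 1)) (r := (3, 1 / 2, -(2 * M + 5) + 3))
    (by simp only [al]; ring) (by intro h; have := congrArg Prod.fst h; norm_num at this)
    (μ := 1) one_pos (hit _ _ ?_ ?_ ?_ ?_ ?_ ?_ ?_ ?_) (hit _ _ ?_ ?_ ?_ ?_ ?_ ?_ ?_ ?_)
    (by rw [hcC]; trivial) (by rw [hcE]; trivial) <;> simp only [FF, pt] <;> linarith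

/-- x-line -/
def xl (y τ s : ℝ) : P3 := (s, y, τ + 2 * s * y)

theorem link {E : Set P3} (hE : Mono E) (hcE : closure E = Set.univ)
    (hcC : closure Eᶜ = Set.univ) {y1 y2 τ1 τ2 : ℝ} (hy : y1 ≠ y2)
    (h1 : ∃ N, ∀ s > N, xl y1 τ1 s ∈ E) (h2 : ∃ N, ∀ s < N, xl y2 τ2 s ∈ E) : False := by
  obtain ⟨N1, h1⟩ := h1
  obtain ⟨N2, h2⟩ := h2
  have hη : y2 - y1 ≠ 0 := sub_ne_zero.2 hy.symm
  set x0 := (τ1 - τ2) / (4 * (y2 - y1)) with hx0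
  have hdet : (1 : ℝ) * (y2 - y1) - 0 * 0 ≠ 0 := by simpa using hη
  have hx : x0 * (4 * (y2 - y1)) = τ1 - τ2 := by rw [hx0]; field_simp
  refine std_link (hE.phi (x0, y1, τ1 + 2 * x0 * y1) 1 0 0 (y2 - y1)) (phi_closure hdet hcE)
    (phi_closure (S := Eᶜ) hdet hcC) (N := max (N1 - x0) (x0 - N2)) ?_ ?_
  · intro s hs
    show _ ∈ E
    convert h1 (x0 + s) (by have := le_max_left (N1 - x0) (x0 - N2); linarith) using 1
    apply P3.ext <;> simp only [phi, xl] <;> ring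
  · intro s hs
    show _ ∈ E
    convert h2 (x0 + s) (by have := le_max_right (N1 - x0) (x0 - N2); linarith) using 1
    apply P3.ext <;> simp only [phi, xl] <;> linarith

theorem al_xl (y τ s s' : ℝ) : al (xl y τ s) (xl y τ s') = 0 := by
  simp only [al, xl]; ring

theorem pt_xl (y τ s s' r : ℝ) : pt (xl y τ s) (xl y τ s') r = xl y τ (s + r * (s' - s)) := by
  apply P3.ext <;> simp only [pt, xl] <;> ring

theorem HC.xl {C : Set P3} (h : HC C) {y τ a b s : ℝ} (ha : xl y τ a ∈ C) (hb : xl y τ b ∈ C)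
    (h1 : a ≤ s) (h2 : s ≤ b) : xl y τ s ∈ C := by
  rcases eq_or_lt_of_le h1 with rfl | h1
  · exact ha
  have := h _ ha _ hb (al_xl ..) ((s - a) / (b - a)) (div_nonneg (by linarith) (by linarith))
    (by rw [div_le_one (by linarith)]; linarith)
  rw [pt_xl] at this
  convert this using 2
  have : b - a ≠ 0 := by linarith
  field_simp; ring

theorem xl_top {E : Set P3} (hE : Mono E) (y τ : ℝ) :
    (∃ N, ∀ s > N, xl y τ s ∈ E) ∨ (∃ N, ∀ s > N, xl y τ s ∈ Eᶜ) := by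
  by_cases h : ∃ N, ∀ s > N, xl y τ s ∈ E
  · exact Or.inl h
  right
  push Not at h
  by_contra h'
  push Not at h'
  obtain ⟨a, _, ha⟩ := h 0
  obtain ⟨b, hab, hb⟩ := h' a
  obtain ⟨c, hbc, hc⟩ := h b
  exact hE.2.xl ha hc hab.le hbc.le (by simpa using hb)

theorem xl_bot {E : Set P3} (hE : Mono E) (y τ : ℝ) :
    (∃ N, ∀ s < N, xl y τ s ∈ E) ∨ (∃ N, ∀ s < N, xl y τ s ∈ Eᶜ) := by
  by_cases h : ∃ N, ∀ s < N, xl y τ s ∈ E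
  · exact Or.inl h
  right
  push Not at h
  by_contra h'
  push Not at h'
  obtain ⟨a, _, ha⟩ := h 0
  obtain ⟨b, hab, hb⟩ := h' a
  obtain ⟨c, hbc, hc⟩ := h b
  exact hE.2.xl hc ha hbc.le hab.le (by simpa using hb)

theorem x_const {E : Set P3} (hE : Mono E) (hcE : closure E = Set.univ)
    (hcC : closure Eᶜ = Set.univ) :
    ∃ σ : ℝ, σ ≠ 0 ∧ ∀ e ∈ E, ∀ s : ℝ, 0 ≤ s → mv e (σ * s) 0 ∈ E := by
  have hcc : closure Eᶜᶜ = Set.univ := by rwa [compl_compl]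
  -- for distinct y : bot(l2) = not top(l1)
  have k1 : ∀ y1 τ1 y2 τ2, y1 ≠ y2 → (∃ N, ∀ s > N, xl y1 τ1 s ∈ E) →
      ¬ (∃ N, ∀ s < N, xl y2 τ2 s ∈ E) := fun y1 τ1 y2 τ2 hy a b => link hE hcE hcC hy a b
  have k2 : ∀ y1 τ1 y2 τ2, y1 ≠ y2 → ¬ (∃ N, ∀ s > N, xl y1 τ1 s ∈ E) →
      (∃ N, ∀ s < N, xl y2 τ2 s ∈ E) := by
    intro y1 τ1 y2 τ2 hy a
    rcases xl_bot hE y2 τ2 with h | h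
    · exact h
    · exact (link hE.compl hcC hcc hy ((xl_top hE y1 τ1).resolve_left a) h).elim
  have hel : ∀ e : P3, ∀ s, mv e s 0 = xl e.2.1 (e.2.2 - 2 * e.1 * e.2.1) (e.1 + s) := by
    intro e s
    apply P3.ext <;> simp only [mv, xl] <;> ring
  have hel0 : ∀ e : P3, e = xl e.2.1 (e.2.2 - 2 * e.1 * e.2.1) e.1 := by
    intro e
    apply P3.ext <;> simp only [xl] <;> ring
  have hneq : ∀ y y' : ℝ, ∃ z : ℝ, y ≠ z ∧ y' ≠ z := by
    intro y y'
    exact ⟨max y y' + 1, by have := le_max_left y y'; intro h; linarith,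
      by have := le_max_right y y'; intro h; linarith⟩
  by_cases hP : ∃ N, ∀ s > N, xl 0 0 s ∈ E
  · have hall : ∀ y τ, ∃ N, ∀ s > N, xl y τ s ∈ E := by
      intro y τ
      by_contra hcon
      obtain ⟨z, z1, z2⟩ := hneq 0 y
      exact k1 0 0 z 0 z1 hP (k2 y τ z 0 z2 hcon)
    refine ⟨1, one_ne_zero, fun e he s hs => ?_⟩
    obtain ⟨N, hN⟩ := hall e.2.1 (e.2.2 - 2 * e.1 * e.2.1)
    rw [hel]
    rw [hel0 e] at he
    refine hE.1.xl he (hN (max N (e.1 + s) + 1) ?_) (by linarith) ?_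
    · have := le_max_left N (e.1 + s); linarith
    · have := le_max_right N (e.1 + s); linarith
  · have hall : ∀ y τ, ∃ N, ∀ s < N, xl y τ s ∈ E := by
      intro y τ
      by_contra hcon
      obtain ⟨z, z1, z2⟩ := hneq 0 y
      by_cases hz : ∃ N, ∀ s > N, xl z 0 s ∈ E
      · obtain ⟨w, w1, w2⟩ := hneq 0 z
        exact k1 z 0 w 0 w2 hz (k2 0 0 w 0 w1 hP)
      · exact hcon (k2 z 0 y τ z2.symm hz)
    refine ⟨-1, by norm_num, fun e he s hs => ?_⟩
    obtain ⟨N, hN⟩ := hall e.2.1 (e.2.2 - 2 * e.1 * e.2.1)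
    rw [hel]
    rw [hel0 e] at he
    refine hE.1.xl (hN (min N (e.1 - s) - 1) ?_) he ?_ (by linarith)
    · have := min_le_left N (e.1 - s); linarith
    · have := min_le_right N (e.1 - s); linarith

theorem y_const {E : Set P3} (hE : Mono E) (hcE : closure E = Set.univ)
    (hcC : closure Eᶜ = Set.univ) :
    ∃ σ : ℝ, σ ≠ 0 ∧ ∀ e ∈ E, ∀ s : ℝ, 0 ≤ s → mv e 0 (σ * s) ∈ E := by
  have hdet : (0 : ℝ) * 0 - (-1) * 1 ≠ 0 := by norm_num
  obtain ⟨σ, hσ, h⟩ := x_const (hE.phi (0, 0, 0) 0 (-1) 1 0) (phi_closure hdet hcE)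
    (phi_closure (S := Eᶜ) hdet hcC)
  refine ⟨σ, hσ, fun e he s hs => ?_⟩
  have := h (e.2.1, -e.1, e.2.2) (by
    show _ ∈ E
    convert he using 1
    apply P3.ext <;> simp only [phi] <;> ring) s hs
  change _ ∈ E at this
  convert this using 1
  apply P3.ext <;> simp only [phi, mv] <;> ring

theorem int_nonempty {E : Set P3} (hE : Mono E) :
    (interior E).Nonempty ∨ (interior Eᶜ).Nonempty := by
  by_contra hcon
  push Not at hcon
  obtain ⟨h1, h2⟩ := hcon
  have hcC : closure Eᶜ = Set.univ := by rw [closure_compl, h1, Set.compl_empty]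
  have hcE : closure E = Set.univ := by
    rw [interior_compl] at h2; exact Set.compl_empty_iff.1 h2
  obtain ⟨σ, hσ, hx⟩ := x_const hE hcE hcC
  obtain ⟨σ', hσ', hy⟩ := y_const hE hcE hcC
  obtain ⟨e, he⟩ : E.Nonempty := by
    by_contra hne
    rw [Set.not_nonempty_iff_eq_empty] at hne
    rw [hne, closure_empty] at hcE
    exact Set.empty_ne_univ hcE
  -- parameters
  let X : P3 → ℝ := fun z => z.1 - e.1
  let Y : P3 → ℝ := fun z => z.2.1 - e.2.1
  let T : P3 → ℝ := fun z => z.2.2 - e.2.2 - 2 * (e.2.1 * X z - e.1 * Y z)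
  let a : P3 → ℝ := fun z => (X z - T z / (2 * Y z)) / 2 / σ
  let b : P3 → ℝ := fun z => Y z / σ'
  let c : P3 → ℝ := fun z => (X z + T z / (2 * Y z)) / 2 / σ
  have hXc : Continuous X := by fun_prop
  have hYc : Continuous Y := by fun_prop
  have hTc : Continuous T := by fun_prop
  let z0 : P3 := mv e (2 * σ) σ'
  have hz0 : z0 = mv e (2 * σ) σ' := rfl
  let z1 : P3 := (z0.1, z0.2.1, z0.2.2)
  have hX0 : X z1 = 2 * σ := by simp only [X, z1, z0, mv]; ring
  have hY0 : Y z1 = σ' := by simp only [Y, z1, z0, mv]; ring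
  have hT0 : T z1 = 0 := by simp only [T, X, Y, z1, z0, mv]; ring
  have hYne : Y z1 ≠ 0 := by rw [hY0]; exact hσ'
  have ha : ContinuousAt a z1 := by
    have hh : ContinuousAt (fun z => T z / (2 * Y z)) z1 :=
      hTc.continuousAt.div (by fun_prop) (by simpa using hYne)
    exact ((hXc.continuousAt.sub hh).div_const 2).div_const σ
  have hb : ContinuousAt b z1 := by fun_prop
  have hc : ContinuousAt c z1 := by
    have hh : ContinuousAt (fun z => T z / (2 * Y z)) z1 :=
      hTc.continuousAt.div (by fun_prop) (by simpa using hYne)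
    exact ((hXc.continuousAt.add hh).div_const 2).div_const σ
  have ha0 : 0 < a z1 := by simp only [a, hX0, hT0, zero_div, sub_zero, add_zero]; field_simp; norm_num
  have hb0 : 0 < b z1 := by simp only [b, hY0]; field_simp; norm_num
  have hc0 : 0 < c z1 := by simp only [c, hX0, hT0, zero_div, sub_zero, add_zero]; field_simp; norm_num
  have hmem : z1 ∈ interior E := by
    rw [mem_interior_iff_mem_nhds]
    filter_upwards [ha.eventually (lt_mem_nhds ha0), hb.eventually (lt_mem_nhds hb0),
      hc.eventually (lt_mem_nhds hc0), hYc.continuousAt.eventually_ne hYne] with z ga gb gc gY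
    have := hx _ (hy _ (hx e he _ ga.le) _ gb.le) _ gc.le
    convert this using 1
    have q1 : σ * a z = (X z - T z / (2 * Y z)) / 2 := by simp only [a]; field_simp
    have q2 : σ' * b z = Y z := by simp only [b]; field_simp
    have q3 : σ * c z = (X z + T z / (2 * Y z)) / 2 := by simp only [c]; field_simp
    rw [q1, q2, q3]
    have q4 : T z / (2 * Y z) * (2 * Y z) = T z := div_mul_cancel₀ _ (by simpa using gY)
    generalize T z / (2 * Y z) = R at *
    apply P3.ext
    · simp only [mv, X]; ring
    · simp only [mv, Y]; ring
    · simp only [mv, X, Y, T] at *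
      linarith
  rw [h1] at hmem
  exact hmem

def SubL (B : Set P3) : Prop :=
  ∀ p ∈ B, ∀ q ∈ B, p ≠ q → al p q = 0 → ∀ s : ℝ, pt p q s ∈ B

theorem pt_zero (p q : P3) : pt p q 0 = p := by apply P3.ext <;> simp only [pt] <;> ring

theorem pt_one (p q : P3) : pt p q 1 = q := by apply P3.ext <;> simp only [pt] <;> ring

theorem not_frontier {E : Set P3} {x : P3} (h : x ∉ frontier E) :
    x ∈ interior E ∨ x ∈ interior Eᶜ := by
  rw [frontier_eq_closure_inter_closure] at h
  by_cases h1 : x ∈ closure E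
  · left
    by_contra h2
    exact h ⟨h1, by rw [closure_compl]; exact h2⟩
  · right
    rw [interior_compl]; exact h1

theorem sub_aux {E : Set P3} (hE : Mono E) {p q : P3} (hp : p ∈ frontier E) (hq : q ∈ frontier E)
    (h : al p q = 0) (s : ℝ) (hx : pt p q s ∈ interior E) : False := by
  have hp' := hp
  have hq' := hq
  rw [frontier_eq_closure_inter_closure] at hp' hq'
  have nq : q ∉ interior Eᶜ := by rw [interior_compl]; exact fun h => h hq'.1
  have np : p ∉ interior Eᶜ := by rw [interior_compl]; exact fun h => h hp'.1
  have nq' : q ∉ interior E := by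
    have := hq'.2; rw [closure_compl] at this; exact this
  have np' : p ∉ interior E := by
    have := hp'.2; rw [closure_compl] at this; exact this
  have hxp : al (pt p q s) p = 0 := by
    have := al_pt p q s 0; rw [pt_zero, h, mul_zero] at this; exact this
  have hxq : al (pt p q s) q = 0 := by
    have := al_pt p q s 1; rw [pt_one, h, mul_zero] at this; exact this
  rcases lt_trichotomy s 0 with hs | rfl | hs
  · apply nq
    have hs' : 0 < -s := by linarith
    convert beyond hE hxp hx hp'.2 (ρ := 1 / (-s)) (by positivity) using 1
    have : s ≠ 0 := hs.ne
    apply P3.ext <;> simp only [pt] <;> field_simp <;> ring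
  · rw [pt_zero] at hx; exact np' hx
  rcases lt_trichotomy s 1 with hs1 | rfl | hs1
  · have hy := beyond hE hxp hx hp'.2 (ρ := 1) one_pos
    have hy2 : al (pt (pt p q s) p (1 + 1)) p = 0 := by
      have := al_pt (pt p q s) p (1 + 1) 1; rw [pt_one, hxp, mul_zero] at this; exact this
    have := beyond hE.compl hy2 hy (by rw [compl_compl]; exact hp'.1) (ρ := 1 / s) (by positivity)
    rw [compl_compl] at this
    apply nq'
    convert this using 1
    apply P3.ext <;> simp only [pt] <;> field_simp <;> ring
  · rw [pt_one] at hx; exact nq' hx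
  · apply np
    have hs' : 0 < s - 1 := by linarith
    convert beyond hE hxq hx hq'.2 (ρ := 1 / (s - 1)) (by positivity) using 1
    have : s - 1 ≠ 0 := hs'.ne'
    apply P3.ext <;> simp only [pt] <;> field_simp <;> ring

theorem sub_frontier {E : Set P3} (hE : Mono E) : SubL (frontier E) := by
  intro p hp q hq _ h s
  by_contra hx
  rcases not_frontier hx with hx | hx
  · exact sub_aux hE hp hq h s hx
  · exact sub_aux hE.compl (by rwa [frontier_compl]) (by rwa [frontier_compl]) h s hx

theorem exists_line {E : Set P3} (hE : Mono E) {p : P3} (hp : p ∈ frontier E) :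
    ∃ a b : ℝ, (a ≠ 0 ∨ b ≠ 0) ∧ ∀ s : ℝ, mv p (s * a) (s * b) ∈ frontier E := by
  have hcl := hp
  rw [frontier_eq_closure_inter_closure] at hcl
  have hex : ∃ θ : ℝ, mv p (Real.cos θ) (Real.sin θ) ∈ frontier E := by
    by_contra hcon
    push Not at hcon
    have hcont : Continuous (fun θ : ℝ => mv p (Real.cos θ) (Real.sin θ)) := by
      unfold mv; fun_prop
    have hpre : IsPreconnected (Set.range (fun θ : ℝ => mv p (Real.cos θ) (Real.sin θ))) :=
      isPreconnected_range hcont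
    have opp : pt (mv p (Real.cos 0) (Real.sin 0)) p (1 + 1)
        = mv p (Real.cos Real.pi) (Real.sin Real.pi) := by
      simp only [Real.cos_zero, Real.sin_zero, Real.cos_pi, Real.sin_pi]
      apply P3.ext <;> simp only [pt, mv] <;> ring
    have hdisj : Disjoint (interior E) (interior Eᶜ) := by
      rw [interior_compl]
      exact Set.disjoint_compl_right_iff_subset.2 interior_subset_closure
    rcases IsPreconnected.subset_or_subset isOpen_interior isOpen_interior hdisj
      (by rintro _ ⟨θ, rfl⟩; exact not_frontier (hcon θ)) hpre with h | h
    · have h0 := h ⟨0, rfl⟩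
      have h1 := h ⟨Real.pi, rfl⟩
      have := beyond hE (al_symm (al_mv ..)) h0 hcl.2 (ρ := 1) one_pos
      simp only at h1
      rw [opp] at this
      exact Set.disjoint_left.1 hdisj h1 this
    · have h0 := h ⟨0, rfl⟩
      have h1 := h ⟨Real.pi, rfl⟩
      have := beyond hE.compl (al_symm (al_mv ..)) h0 (by rw [compl_compl]; exact hcl.1)
        (ρ := 1) one_pos
      simp only at h1
      rw [opp, compl_compl] at this
      exact Set.disjoint_left.1 hdisj this h1
  obtain ⟨θ, hθ⟩ := hex
  have hne : Real.cos θ ≠ 0 ∨ Real.sin θ ≠ 0 := by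
    by_contra h
    push Not at h
    have := Real.sin_sq_add_cos_sq θ
    rw [h.1, h.2] at this; norm_num at this
  refine ⟨_, _, hne, fun s => ?_⟩
  rw [← pt_mv]
  refine sub_frontier hE _ hp _ hθ ?_ (al_mv ..) s
  intro heq
  have g1 := congrArg Prod.fst heq
  have g2 := congrArg (fun z : P3 => z.2.1) heq
  simp only [mv] at g1 g2
  rcases hne with h | h <;> apply h <;> linarith

theorem std_sub {B : Set P3} (hcl : IsClosed B) (hB : SubL B)
    (h1 : ∀ s : ℝ, ((s, 0, 0) : P3) ∈ B) (h2 : ∀ s : ℝ, ((s, 1, 2 * s) : P3) ∈ B) :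
    B = Set.univ := by
  have hF : ∀ z : P3, FF z = 0 → z ∈ B := by
    rintro ⟨x, y, t⟩ hz
    simp only [FF] at hz
    by_cases hy : y = 0
    · subst hy
      have : t = 0 := by linarith
      subst this
      exact h1 x
    have := hB _ (h1 (-t / (2 * y))) _ (h2 (-(-t / (2 * y))))
      (by intro h; have := congrArg (fun z : P3 => z.2.1) h; norm_num at this)
      (by simp only [al]; ring) y
    convert this using 1
    apply P3.ext
    · simp only [pt]; field_simp; linarith
    · simp only [pt]; ring
    · simp only [pt]; field_simp; ring
  have hgen : ∀ X Y T : ℝ, Y ≠ 0 → Y ≠ 1 → 1 - 2 * Y ≠ 0 → ((X, Y, T) : P3) ∈ B := by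
    intro X Y T hY0 hY1 hY2
    have hY1' : 1 - Y ≠ 0 := fun h => hY1 (by linarith)
    set K := T * (1 - 2 * Y) + 2 * X * Y with hK
    set b0 := 4 * X * Y - 2 * T with hb0
    set g := 2 * (1 - 2 * Y) / (4 * Y * (1 - Y)) with hg
    have hg0 : g ≠ 0 := by rw [hg]; positivity
    set h := 4 * X - g * b0 with hh
    -- a = (β - b0)/(4Y(1-Y)), A = gβ + h
    have hbig : ∀ β : ℝ, 1 + |4 * K * g| + |4 * K * h| ≤ β → 0 < β ^ 2 - 4 * K * (g * β + h) := by
      intro β hβ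
      have q1 := le_abs_self (4 * K * g)
      have q2 := le_abs_self (4 * K * h)
      have q3 := abs_nonneg (4 * K * g)
      have q4 := abs_nonneg (4 * K * h)
      have hβ1 : 1 ≤ β := by linarith
      nlinarith [mul_le_mul_of_nonneg_left q1 (by linarith : (0:ℝ) ≤ β),
        mul_le_mul_of_nonneg_left hβ (by linarith : (0:ℝ) ≤ β),
        mul_nonneg q4 (by linarith : (0:ℝ) ≤ β - 1)]
    obtain ⟨β, hβ, hA⟩ : ∃ β : ℝ, 0 < β ^ 2 - 4 * K * (g * β + h) ∧ g * β + h ≠ 0 := by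
      set β0 := 1 + |4 * K * g| + |4 * K * h|
      by_cases hA : g * β0 + h = 0
      · refine ⟨β0 + 1, hbig _ (by linarith), ?_⟩
        intro h'
        apply hg0
        linarith
      · exact ⟨β0, hbig _ le_rfl, hA⟩
    obtain ⟨a, ha⟩ : ∃ a, a * (4 * Y * (1 - Y)) = β - b0 :=
      ⟨(β - b0) / (4 * Y * (1 - Y)), by field_simp⟩
    have hAe : 2 * a * (1 - 2 * Y) + 4 * X = g * β + h := by
      have : g * (β - b0) = 2 * a * (1 - 2 * Y) := by
        rw [← ha, hg]; field_simp
      rw [hh]; linarith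
    set A := g * β + h with hAdef
    set S := Real.sqrt (β ^ 2 - 4 * K * A) with hS
    have hS2 : S ^ 2 = β ^ 2 - 4 * K * A := Real.sq_sqrt hβ.le
    have hS0 : 0 < S := Real.sqrt_pos.2 hβ
    have hroot : ∀ r : ℝ, A * r ^ 2 + β * r + K = 0 →
        mv (X, Y, T) (r * a) r ∈ B := by
      intro r hr
      apply hF
      simp only [FF, mv]
      have hβe : β = a * (4 * Y * (1 - Y)) + b0 := by linarith
      rw [← hAe, hβe, hb0, hK] at hr
      linear_combination hr
    have r1 := hroot ((-β + S) / (2 * A)) (by field_simp; linear_combination hS2)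
    have r2 := hroot ((-β - S) / (2 * A)) (by field_simp; linear_combination hS2)
    have hd : (-β - S) / (2 * A) - (-β + S) / (2 * A) ≠ 0 := by
      rw [← sub_div]
      apply div_ne_zero
      · intro h; linarith
      · simpa using hA
    generalize (-β + S) / (2 * A) = u1 at *
    generalize (-β - S) / (2 * A) = u2 at *
    have := hB _ r1 _ r2 (by
      intro heq
      have g2 := congrArg (fun z : P3 => z.2.1) heq
      simp only [mv] at g2
      apply hd; linarith) (by simp only [al, mv]; ring) (-u1 / (u2 - u1))
    convert this using 1
    apply P3.ext <;> simp only [pt, mv] <;> field_simp <;> ring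
  rw [Set.eq_univ_iff_forall]
  rintro ⟨X, Y, T⟩
  have hc : IsClosed ((fun y : ℝ => ((X, y, T) : P3)) ⁻¹' B) := hcl.preimage (by fun_prop)
  have hd : Dense ({0, 1, 1 / 2} : Set ℝ)ᶜ := Set.Countable.dense_compl ℝ (Set.Finite.countable (by simp))
  have hsub : ({0, 1, 1 / 2} : Set ℝ)ᶜ ⊆ (fun y : ℝ => ((X, y, T) : P3)) ⁻¹' B := by
    intro y hy
    simp only [Set.mem_compl_iff, Set.mem_insert_iff, Set.mem_singleton_iff, not_or] at hy
    exact hgen X y T hy.1 hy.2.1 (fun h => hy.2.2 (by linarith))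
  have := hc.closure_subset_iff.2 hsub
  rw [hd.closure_eq] at this
  exact this (Set.mem_univ Y)

theorem SubL.phi {B : Set P3} (hB : SubL B) (p : P3) (α β γ δ : ℝ) (h : α * δ - β * γ ≠ 0) :
    SubL (phi p α β γ δ ⁻¹' B) := by
  intro z hz w hw hne hzw s
  show _ ∈ B
  rw [pt_phi]
  exact hB _ hz _ hw (fun heq => hne ((phiH p α β γ δ h).injective heq))
    (by rw [al_phi, hzw, mul_zero]) s

theorem phi_univ {B : Set P3} {p : P3} {α β γ δ : ℝ} (h : α * δ - β * γ ≠ 0)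
    (hu : phi p α β γ δ ⁻¹' B = Set.univ) : B = Set.univ := by
  rw [Set.eq_univ_iff_forall]
  intro z
  obtain ⟨w, rfl⟩ := (phiH p α β γ δ h).surjective z
  exact (Set.eq_univ_iff_forall.1 hu) w

theorem par_sub {B : Set P3} (hcl : IsClosed B) (hB : SubL B) {a b : P3} {v0 v1 : ℝ}
    (ha : ∀ s : ℝ, mv a (s * v0) (s * v1) ∈ B) (hb : ∀ s : ℝ, mv b (s * v0) (s * v1) ∈ B)
    (hd : v0 * (b.2.1 - a.2.1) - (b.1 - a.1) * v1 ≠ 0) : B = Set.univ := by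
  set D := v0 * (b.2.1 - a.2.1) - (b.1 - a.1) * v1 with hD
  set x0 := al a b / (-4 * D) with hx0
  have hx : x0 * (-4 * D) = al a b := by rw [hx0]; field_simp
  clear_value x0
  rw [hD] at hx
  simp only [al] at hx
  have hsub := hB.phi (mv a (x0 * v0) (x0 * v1)) v0 (b.1 - a.1) v1 (b.2.1 - a.2.1) hd
  refine phi_univ (p := mv a (x0 * v0) (x0 * v1)) hd
    (std_sub (hcl.preimage (phi_cont ..)) hsub ?_ ?_)
  · intro s
    show _ ∈ B
    convert ha (x0 + s) using 1
    apply P3.ext <;> simp only [phi, mv] <;> ring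
  · intro s
    show _ ∈ B
    convert hb (x0 + s) using 1
    apply P3.ext
    · simp only [phi, mv]; ring
    · simp only [phi, mv]; ring
    · simp only [phi, mv]; linear_combination hx

theorem meet_sub {B : Set P3} (hcl : IsClosed B) (hB : SubL B) (hne : B ≠ Set.univ)
    {a b : P3} {v0 v1 w0 w1 : ℝ}
    (ha : ∀ s : ℝ, mv a (s * v0) (s * v1) ∈ B) (hb : ∀ s : ℝ, mv b (s * w0) (s * w1) ∈ B)
    (hd : v0 * w1 - w0 * v1 ≠ 0) :
    ∃ s r : ℝ, mv a (s * v0) (s * v1) = mv b (r * w0) (r * w1) := by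
  set s := ((b.1 - a.1) * w1 - (b.2.1 - a.2.1) * w0) / (v0 * w1 - w0 * v1) with hs
  set r := ((b.1 - a.1) * v1 - (b.2.1 - a.2.1) * v0) / (v0 * w1 - w0 * v1) with hr
  have hs' : s * (v0 * w1 - w0 * v1) = (b.1 - a.1) * w1 - (b.2.1 - a.2.1) * w0 := by
    rw [hs]; exact div_mul_cancel₀ _ hd
  have hr' : r * (v0 * w1 - w0 * v1) = (b.1 - a.1) * v1 - (b.2.1 - a.2.1) * v0 := by
    rw [hr]; exact div_mul_cancel₀ _ hd
  clear_value s r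
  have c0 : a.1 + s * v0 = b.1 + r * w0 := by
    apply mul_right_cancel₀ hd
    linear_combination v0 * hs' - w0 * hr'
  have c1 : a.2.1 + s * v1 = b.2.1 + r * w1 := by
    apply mul_right_cancel₀ hd
    linear_combination v1 * hs' - w1 * hr'
  refine ⟨s, r, ?_⟩
  by_contra hcon
  apply hne
  set A := mv a (s * v0) (s * v1) with hA
  set t0 := (mv b (r * w0) (r * w1)).2.2 - A.2.2 with ht0
  have ht : t0 ≠ 0 := by
    intro h
    exact hcon (P3.ext c0 c1 (by linarith))
  set k := t0 / (v0 * w1 - w0 * v1) with hk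
  have hk0 : k ≠ 0 := div_ne_zero ht hd
  have hkt : k * (v0 * w1 - w0 * v1) = t0 := by rw [hk]; exact div_mul_cancel₀ _ hd
  clear_value k
  have hsub := hB.phi A v0 w0 v1 w1 hd
  have l1 : ∀ x : ℝ, ((x, 0, 0) : P3) ∈ phi A v0 w0 v1 w1 ⁻¹' B := by
    intro x
    show _ ∈ B
    convert ha (s + x) using 1
    apply P3.ext <;> simp only [phi, mv, hA] <;> ring
  have l2 : ∀ y : ℝ, ((0, y, k) : P3) ∈ phi A v0 w0 v1 w1 ⁻¹' B := by
    intro y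
    show _ ∈ B
    convert hb (r + y) using 1
    apply P3.ext
    · simp only [phi, mv, hA]; linear_combination c0
    · simp only [phi, mv, hA]; linear_combination c1
    · simp only [phi, mv, hA, ht0] at *
      linear_combination hkt + 2 * y * w0 * c1 - 2 * y * w1 * c0
  refine phi_univ hd (par_sub (hcl.preimage (phi_cont ..)) hsub (a := (1, 0, 0)) (b := (-1, 0, 0))
    (v0 := 1) (v1 := k / 2) ?_ ?_ ?_)
  · intro x
    have := hsub _ (l1 1) _ (l2 (-k / 2))
      (by intro h; have := congrArg Prod.fst h; norm_num at this) (by simp only [al]; ring) (-x)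
    convert this using 1
    apply P3.ext <;> simp only [pt, mv] <;> ring
  · intro x
    have := hsub _ (l1 (-1)) _ (l2 (k / 2))
      (by intro h; have := congrArg Prod.fst h; norm_num at this) (by simp only [al]; ring) x
    convert this using 1
    apply P3.ext <;> simp only [pt, mv] <;> ring
  · simp only
    intro h
    apply hk0
    linarith

theorem line_par {B : Set P3} {z : P3} {v0 v1 w0 w1 : ℝ} (hw : w0 ≠ 0 ∨ w1 ≠ 0)
    (hd : v0 * w1 - w0 * v1 = 0) (h : ∀ s : ℝ, mv z (s * w0) (s * w1) ∈ B) :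
    ∀ s : ℝ, mv z (s * v0) (s * v1) ∈ B := by
  intro s
  obtain ⟨c, c0, c1⟩ : ∃ c, v0 = c * w0 ∧ v1 = c * w1 := by
    rcases hw with hw | hw
    · refine ⟨v0 / w0, by field_simp, ?_⟩
      field_simp; linarith
    · refine ⟨v1 / w1, ?_, by field_simp⟩
      field_simp; linarith
  have := h (s * c)
  rw [c0, c1]
  convert this using 2 <;> ring

theorem det_claim {B : Set P3} (hcl : IsClosed B) (hB : SubL B) (hne : B ≠ Set.univ)
    {a z : P3} {v0 v1 w0 w1 : ℝ}
    (hv : ∀ s : ℝ, mv a (s * v0) (s * v1) ∈ B) (hw : ∀ s : ℝ, mv a (s * w0) (s * w1) ∈ B)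
    (hz : ∀ s : ℝ, mv z (s * v0) (s * v1) ∈ B)
    (hd : v0 * w1 - w0 * v1 ≠ 0) : al a z = 0 := by
  have h0 : v0 * (z.2.1 - a.2.1) - (z.1 - a.1) * v1 = 0 := by
    by_contra h
    exact hne (par_sub hcl hB hv hz h)
  obtain ⟨s, r, h⟩ := meet_sub hcl hB hne hz hw hd
  have e0 := congrArg Prod.fst h
  have e1 := congrArg (fun z : P3 => z.2.1) h
  simp only [mv] at e0 e1
  have hr : r = 0 := by
    have : r * (v0 * w1 - w0 * v1) = 0 := by linear_combination h0 + v1 * e0 - v0 * e1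
    rcases mul_eq_zero.1 this with h | h
    · exact h
    · exact absurd h hd
  subst hr
  have ha : a = mv a (0 * w0) (0 * w1) := by
    apply P3.ext <;> simp only [mv] <;> ring
  rw [ha, ← h]
  exact al_symm (al_mv ..)

theorem plane {B : Set P3} (hcl : IsClosed B) (hB : SubL B) (hne : B ≠ Set.univ)
    (hln : ∀ p ∈ B, ∃ a b : ℝ, (a ≠ 0 ∨ b ≠ 0) ∧ ∀ s : ℝ, mv p (s * a) (s * b) ∈ B) :
    ∃ n0 n1 n2 k : ℝ, ¬ (n0 = 0 ∧ n1 = 0 ∧ n2 = 0) ∧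
      ∀ z ∈ B, n0 * z.1 + n1 * z.2.1 + n2 * z.2.2 = k := by
  rcases B.eq_empty_or_nonempty with rfl | ⟨p, hp⟩
  · exact ⟨1, 0, 0, 0, by norm_num, by simp⟩
  obtain ⟨v0, v1, hv0, hv⟩ := hln p hp
  by_cases hall : ∀ b ∈ B, v0 * (b.2.1 - p.2.1) - (b.1 - p.1) * v1 = 0
  · refine ⟨-v1, v0, 0, v0 * p.2.1 - p.1 * v1, ?_, ?_⟩
    · rintro ⟨h1, h2, -⟩
      rcases hv0 with h | h
      · exact h h2
      · exact h (by linarith)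
    · intro z hz
      linear_combination hall z hz
  push Not at hall
  obtain ⟨b, hb, hdet⟩ := hall
  obtain ⟨w0, w1, hw0, hw⟩ := hln b hb
  have hd : v0 * w1 - w0 * v1 ≠ 0 := by
    intro h
    exact hne (par_sub hcl hB hv (line_par hw0 h hw) hdet)
  obtain ⟨s, r, hsr⟩ := meet_sub hcl hB hne hv hw hd
  obtain ⟨a, ha⟩ : ∃ a, a = mv p (s * v0) (s * v1) := ⟨_, rfl⟩
  have hva : ∀ x : ℝ, mv a (x * v0) (x * v1) ∈ B := by
    intro x
    convert hv (s + x) using 1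
    rw [ha]
    apply P3.ext <;> simp only [mv] <;> ring
  have hwa : ∀ x : ℝ, mv a (x * w0) (x * w1) ∈ B := by
    intro x
    convert hw (r + x) using 1
    rw [ha, hsr]
    apply P3.ext <;> simp only [mv] <;> ring
  refine ⟨-2 * a.2.1, 2 * a.1, 1, a.2.2, by norm_num, ?_⟩
  intro z hz
  suffices h : al a z = 0 by
    simp only [al] at h; linear_combination h
  obtain ⟨o0, o1, ho, hzo⟩ := hln z hz
  by_cases hov : v0 * o1 - o0 * v1 = 0
  · exact det_claim hcl hB hne hva hwa (line_par ho hov hzo) hd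
  by_cases how : w0 * o1 - o0 * w1 = 0
  · exact det_claim hcl hB hne hwa hva (line_par ho how hzo) (fun h => hd (by linarith))
  obtain ⟨s1, r1, h1⟩ := meet_sub hcl hB hne hva hzo hov
  obtain ⟨s2, r2, h2⟩ := meet_sub hcl hB hne hwa hzo how
  have hal : al (mv a (s1 * v0) (s1 * v1)) (mv a (s2 * w0) (s2 * w1)) = 0 := by
    rw [h1, h2]; simp only [al, mv]; ring
  have ha0 : ∀ c d : ℝ, mv a (0 * c) (0 * d) = a := by
    intro c d
    apply P3.ext <;> simp only [mv] <;> ring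
  have hs : s1 * s2 * (v0 * w1 - w0 * v1) = 0 := by
    simp only [al, mv] at hal; linear_combination hal / 2
  rcases mul_eq_zero.1 hs with hs | hs
  · rcases mul_eq_zero.1 hs with rfl | rfl
    · rw [ha0] at h1; rw [h1]; exact al_symm (al_mv ..)
    · rw [ha0] at h2; rw [h2]; exact al_symm (al_mv ..)
  · exact absurd hs hd

theorem int_disj (E : Set P3) : Disjoint (interior E) (interior Eᶜ) := by
  rw [interior_compl]
  exact Set.disjoint_compl_right_iff_subset.2 interior_subset_closure

theorem flat {E : Set P3} (hE : Mono E) {n0 n1 n2 k : ℝ} {p : P3} (hp : p ∈ frontier E)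
    (hpk : n0 * p.1 + n1 * p.2.1 + n2 * p.2.2 = k)
    (h : ∀ z : P3, n0 * z.1 + n1 * z.2.1 + n2 * z.2.2 ≠ k → z ∈ interior E) (a b : ℝ) :
    (n0 + 2 * n2 * p.2.1) * a + (n1 - 2 * n2 * p.1) * b = 0 := by
  by_contra hcon
  rw [frontier_eq_closure_inter_closure] at hp
  have m1 : mv p a b ∈ interior E := h _ (by
    intro h; apply hcon; simp only [mv] at h; linear_combination h - hpk)
  have m2 : mv p (-a) (-b) ∈ interior E := h _ (by
    intro h; apply hcon; simp only [mv] at h; linear_combination hpk - h)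
  have := beyond hE (al_symm (al_mv ..)) m1 hp.2 (ρ := 1) one_pos
  have e : pt (mv p a b) p (1 + 1) = mv p (-a) (-b) := by
    apply P3.ext <;> simp only [pt, mv] <;> ring
  rw [e] at this
  exact Set.disjoint_left.1 (int_disj E) m2 this

theorem not_both {E : Set P3} (hE : Mono E) {n0 n1 n2 k : ℝ} {p : P3} (hp : p ∈ frontier E)
    (hn : ¬ (n0 = 0 ∧ n1 = 0 ∧ n2 = 0))
    (hk : ∀ z ∈ frontier E, n0 * z.1 + n1 * z.2.1 + n2 * z.2.2 = k)
    (h : ∀ z : P3, n0 * z.1 + n1 * z.2.1 + n2 * z.2.2 ≠ k → z ∈ interior E) : False := by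
  obtain ⟨a, b, hab, hl⟩ := exists_line hE hp
  have hq := hl 1
  have p1 := flat hE hp (hk _ hp) h 1 0
  have p2 := flat hE hp (hk _ hp) h 0 1
  have q1 := flat hE hq (hk _ hq) h 1 0
  have q2 := flat hE hq (hk _ hq) h 0 1
  simp only [mv] at q1 q2
  have c1 : n2 * b = 0 := by linear_combination (q1 - p1) / 2
  have c2 : n2 * a = 0 := by linear_combination -(q2 - p2) / 2
  have hn2 : n2 = 0 := by
    rcases hab with h | h
    · exact (mul_eq_zero.1 c2).resolve_right h
    · exact (mul_eq_zero.1 c1).resolve_right h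
  subst hn2
  exact hn ⟨by linear_combination p1, by linear_combination p2, rfl⟩

/-- Monotone sets in the Heisenberg group. -/
theorem T3 {E : Set P3} (hE : Mono E) : E = ∅ ∨ E = Set.univ ∨
    ∃ n0 n1 n2 k : ℝ, ¬ (n0 = 0 ∧ n1 = 0 ∧ n2 = 0) ∧
      (∀ z : P3, k < n0 * z.1 + n1 * z.2.1 + n2 * z.2.2 → z ∈ E) ∧
      (∀ z : P3, n0 * z.1 + n1 * z.2.1 + n2 * z.2.2 < k → z ∉ E) := by
  rcases (frontier E).eq_empty_or_nonempty with h0 | ⟨p, hp⟩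
  · have : IsClopen E := isClopen_iff_frontier_eq_empty.2 h0
    rcases isClopen_iff.1 this with h | h
    · exact Or.inl h
    · exact Or.inr (Or.inl h)
  right; right
  have hne : frontier E ≠ Set.univ := by
    intro h
    rcases int_nonempty hE with ⟨x, hx⟩ | ⟨x, hx⟩
    · have : x ∈ frontier E := by rw [h]; trivial
      exact this.2 hx
    · have : x ∈ frontier E := by rw [h]; trivial
      rw [← frontier_compl] at this
      exact this.2 hx
  obtain ⟨n0, n1, n2, k, hn, hk⟩ := plane isClosed_frontier (sub_frontier hE) hne
    (fun p hp => exists_line hE hp)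
  have c1 : IsPreconnected {z : P3 | k < n0 * z.1 + n1 * z.2.1 + n2 * z.2.2} := by
    apply Convex.isPreconnected
    apply convex_halfSpace_gt
    constructor
    · intro x y; simp only [Prod.fst_add, Prod.snd_add]; ring
    · intro c x; simp only [Prod.smul_fst, Prod.smul_snd, smul_eq_mul]; ring
  have c2 : IsPreconnected {z : P3 | n0 * z.1 + n1 * z.2.1 + n2 * z.2.2 < k} := by
    apply Convex.isPreconnected
    apply convex_halfSpace_lt
    constructor
    · intro x y; simp only [Prod.fst_add, Prod.snd_add]; ring
    · intro c x; simp only [Prod.smul_fst, Prod.smul_snd, smul_eq_mul]; ring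
  have d1 := IsPreconnected.subset_or_subset isOpen_interior isOpen_interior (int_disj E)
      (by intro z hz; exact not_frontier (fun h => (ne_of_gt hz) (hk z h))) c1
  have d2 := IsPreconnected.subset_or_subset isOpen_interior isOpen_interior (int_disj E)
      (by intro z hz; exact not_frontier (fun h => (ne_of_lt hz) (hk z h))) c2
  rcases d1 with d1 | d1 <;> rcases d2 with d2 | d2
  · exact (not_both hE hp hn hk (fun z hz => by
      rcases lt_or_gt_of_ne hz with h | h
      · exact d2 h
      · exact d1 h)).elim
  · exact ⟨n0, n1, n2, k, hn, fun z hz => interior_subset (d1 hz),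
      fun z hz => interior_subset (d2 hz)⟩
  · refine ⟨-n0, -n1, -n2, -k, ?_, fun z hz => interior_subset (d2 ?_),
      fun z hz => interior_subset (d1 ?_)⟩
    · rintro ⟨h0, h1, h2⟩
      exact hn ⟨by linarith, by linarith, by linarith⟩
    · show _ < k
      linarith
    · show k < _
      linarith
  · rw [← frontier_compl] at hp hk
    exact (not_both hE.compl hp hn hk (fun z hz => by
      rcases lt_or_gt_of_ne hz with h | h
      · exact d2 h
      · exact d1 h)).elim

abbrev P4 := P3 × ℝ

def HC4 (F : Set P4) : Prop :=
  ∀ p q : P3, ∀ u v : ℝ, (p, u) ∈ F → (q, v) ∈ F → al p q = 0 →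
    ∀ s : ℝ, 0 ≤ s → s ≤ 1 → (pt p q s, u + s * (v - u)) ∈ F

def Mono4 (F : Set P4) : Prop := HC4 F ∧ HC4 Fᶜ

theorem Mono4.compl {F : Set P4} (h : Mono4 F) : Mono4 Fᶜ :=
  ⟨h.2, by rw [compl_compl]; exact h.1⟩

def flip4 (F : Set P4) : Set P4 := {z | (z.1, -z.2) ∈ F}

theorem HC4.flip {F : Set P4} (h : HC4 F) : HC4 (flip4 F) := by
  intro p q u v hp hq hal s h0 h1
  have := h p q (-u) (-v) hp hq hal s h0 h1
  show (pt p q s, -(u + s * (v - u))) ∈ F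
  convert this using 2
  ring

theorem Mono4.flip {F : Set P4} (h : Mono4 F) : Mono4 (flip4 F) := ⟨h.1.flip, h.2.flip⟩

theorem al_self (p : P3) : al p p = 0 := by simp only [al]; ring

theorem pt_self (p : P3) (s : ℝ) : pt p p s = p := by
  apply P3.ext <;> simp only [pt] <;> ring

theorem HC4.fib {F : Set P4} (h : HC4 F) {p : P3} {u v w : ℝ} (hu : (p, u) ∈ F)
    (hv : (p, v) ∈ F) (h1 : u ≤ w) (h2 : w ≤ v) : (p, w) ∈ F := by
  rcases eq_or_lt_of_le (h1.trans h2) with h3 | h3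
  · have : w = u := by linarith
    rw [this]; exact hu
  have h4 : 0 < v - u := by linarith
  have := h p p u v hu hv (al_self p) ((w - u) / (v - u)) (div_nonneg (by linarith) h4.le)
    (by rw [div_le_one h4]; linarith)
  rw [pt_self, div_mul_cancel₀ _ h4.ne'] at this
  convert this using 2
  ring

def Ep (F : Set P4) : Set P3 := {p | ∃ N : ℝ, ∀ u : ℝ, N < u → (p, u) ∈ F}
def Em (F : Set P4) : Set P3 := {p | ∃ N : ℝ, ∀ u : ℝ, u < N → (p, u) ∈ F}

theorem Ep_flip (F : Set P4) : Ep (flip4 F) = Em F := by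
  ext p
  constructor
  · rintro ⟨N, hN⟩
    refine ⟨-N, fun u hu => ?_⟩
    have : (p, - -u) ∈ F := hN (-u) (by linarith)
    rwa [neg_neg] at this
  · rintro ⟨N, hN⟩
    exact ⟨-N, fun u hu => hN (-u) (by linarith)⟩

theorem Em_flip (F : Set P4) : Em (flip4 F) = Ep F := by
  rw [← Ep_flip]
  congr 1
  ext ⟨p, u⟩
  show (p, - -u) ∈ F ↔ _
  rw [neg_neg]

theorem Ep_compl {F : Set P4} (h : Mono4 F) : Ep Fᶜ = (Ep F)ᶜ := by
  ext p
  constructor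
  · rintro ⟨N, hN⟩ ⟨M, hM⟩
    exact hN (max N M + 1) (by linarith [le_max_left N M]) (hM _ (by linarith [le_max_right N M]))
  · intro hp
    by_contra hc
    simp only [Ep, Set.mem_ofPred_eq, Set.mem_compl_iff, not_exists, not_forall] at hp hc
    obtain ⟨u1, -, hu1⟩ := hp 0
    obtain ⟨u2, h12, hu2⟩ := hc u1
    obtain ⟨u3, h23, hu3⟩ := hp u2
    exact hu2 (h.2.fib hu1 hu3 h12.le h23.le)

theorem Em_compl {F : Set P4} (h : Mono4 F) : Em Fᶜ = (Em F)ᶜ := by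
  rw [← Ep_flip, ← Ep_flip, ← Ep_compl h.flip]; rfl

theorem HC_Ep {F : Set P4} (h : HC4 F) : HC (Ep F) := by
  rintro p ⟨N, hN⟩ q ⟨M, hM⟩ hal s h0 h1
  refine ⟨max N M, fun u hu => ?_⟩
  have := h p q u u (hN u (lt_of_le_of_lt (le_max_left _ _) hu))
    (hM u (lt_of_le_of_lt (le_max_right _ _) hu)) hal s h0 h1
  convert this using 2
  ring

theorem HC_Em {F : Set P4} (h : HC4 F) : HC (Em F) := by
  rw [← Ep_flip]; exact HC_Ep h.flip

theorem Mono_Ep {F : Set P4} (h : Mono4 F) : Mono (Ep F) :=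
  ⟨HC_Ep h.1, by rw [← Ep_compl h]; exact HC_Ep h.2⟩

theorem Mono_Em {F : Set P4} (h : Mono4 F) : Mono (Em F) :=
  ⟨HC_Em h.1, by rw [← Em_compl h]; exact HC_Em h.2⟩

def Up (F : Set P4) : Set P3 := Ep F ∩ Em Fᶜ

theorem Up_sym (F : Set P4) : Up (flip4 Fᶜ) = Up F := by
  have : (flip4 Fᶜ)ᶜ = flip4 F := by
    ext z; simp [flip4]
  rw [Up, this, Ep_flip, Em_flip, Set.inter_comm]; rfl

theorem up_out1 {F : Set P4} (hF : Mono4 F) {p q : P3} (hp : p ∈ Up F) (hq : q ∈ Up F)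
    (hal : al p q = 0) {s : ℝ} (hs : 1 < s) : pt p q s ∈ Ep F := by
  by_contra hc
  have hc' : pt p q s ∈ Ep Fᶜ := by rw [Ep_compl hF]; exact hc
  obtain ⟨N3, h3⟩ := hc'
  obtain ⟨N1, h1⟩ := hp.2
  obtain ⟨N2, h2⟩ := hq.1
  have hs0 : 0 < s := by linarith
  set M := max N3 (s * N2 - (s - 1) * (N1 - 1)) + 1 with hM
  have m1 : N3 < M := by have := le_max_left N3 (s * N2 - (s - 1) * (N1 - 1)); linarith
  have m2 : s * N2 - (s - 1) * (N1 - 1) < M := by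
    have := le_max_right N3 (s * N2 - (s - 1) * (N1 - 1)); linarith
  have key := hF.2 p (pt p q s) (N1 - 1) M (h1 _ (by linarith)) (h3 _ m1)
    (by have := al_pt p q 0 s; rw [pt_zero, hal, mul_zero] at this; exact this) (1 / s)
    (by positivity) (by rw [div_le_one hs0]; exact hs.le)
  have e : pt p (pt p q s) (1 / s) = q := by
    apply P3.ext <;> simp only [pt] <;> field_simp <;> ring
  rw [e] at key
  apply key
  apply h2
  have : N1 - 1 + 1 / s * (M - (N1 - 1)) - N2 = (M - (s * N2 - (s - 1) * (N1 - 1))) / s := by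
    field_simp; ring
  have h5 : 0 < (M - (s * N2 - (s - 1) * (N1 - 1))) / s := div_pos (by linarith) hs0
  linarith

theorem up_out {F : Set P4} (hF : Mono4 F) {p q : P3} (hp : p ∈ Up F) (hq : q ∈ Up F)
    (hal : al p q = 0) {s : ℝ} (hs : 1 < s) : pt p q s ∈ Up F := by
  refine ⟨up_out1 hF hp hq hal hs, ?_⟩
  rw [← Up_sym] at hp hq
  have := up_out1 hF.compl.flip hp hq hal hs
  rwa [Ep_flip] at this

theorem up_line {F : Set P4} (hF : Mono4 F) {p q : P3} (hp : p ∈ Up F) (hq : q ∈ Up F)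
    (hal : al p q = 0) (s : ℝ) : pt p q s ∈ Up F := by
  rcases lt_or_ge 1 s with h1 | h1
  · exact up_out hF hp hq hal h1
  rcases lt_or_ge s 0 with h0 | h0
  · have := up_out hF hq hp (al_symm hal) (s := 1 - s) (by linarith)
    convert this using 1
    apply P3.ext <;> simp only [pt] <;> ring
  · exact ⟨HC_Ep hF.1 _ hp.1 _ hq.1 hal s h0 h1, HC_Em hF.2 _ hp.2 _ hq.2 hal s h0 h1⟩

theorem up_step {F : Set P4} (hF : Mono4 F) {p : P3} (hp : p ∈ interior (Up F)) (a b : ℝ) :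
    mv p a b ∈ interior (Up F) := by
  have inv : ∀ z : P3, mv (mv z (-a) (-b)) a b = z := by
    intro z; apply P3.ext <;> simp only [mv] <;> ring
  have inv' : ∀ z : P3, mv (mv z a b) (-a) (-b) = z := by
    intro z; apply P3.ext <;> simp only [mv] <;> ring
  rw [mem_interior]
  refine ⟨(fun z => mv z (-a) (-b)) ⁻¹' interior (Up F), ?_,
    isOpen_interior.preimage (continuous_mv _ _), ?_⟩
  · intro z hz
    have hw : mv z (-a) (-b) ∈ interior (Up F) := hz
    rw [← inv z]
    generalize mv z (-a) (-b) = w at hw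
    have hc : Continuous (fun e : ℝ => mv w (e * a) (e * b)) := by unfold mv; fun_prop
    have hw0 : mv w (0 * a) (0 * b) = w := by
      apply P3.ext <;> simp only [mv] <;> ring
    have hn : (fun e : ℝ => mv w (e * a) (e * b)) ⁻¹' interior (Up F) ∈ nhds (0 : ℝ) :=
      (isOpen_interior.preimage hc).mem_nhds (by
        show mv w (0 * a) (0 * b) ∈ interior (Up F)
        rw [hw0]; exact hw)
    obtain ⟨ε, hε, hb⟩ := Metric.mem_nhds_iff.1 hn
    have h2 : mv w (ε / 2 * a) (ε / 2 * b) ∈ interior (Up F) := hb (by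
      rw [Metric.mem_ball, Real.dist_eq, sub_zero, abs_of_pos (by positivity)]; linarith)
    have := up_line hF (interior_subset hw) (interior_subset h2) (al_mv ..) (2 / ε)
    rw [pt_mv] at this
    convert this using 2 <;> field_simp
  · show mv (mv p a b) (-a) (-b) ∈ interior (Up F)
    rw [inv']; exact hp

theorem up_reach {F : Set P4} (hF : Mono4 F) {p : P3} (hp : p ∈ interior (Up F)) (z : P3)
    (hy : z.2.1 - p.2.1 ≠ 0) : z ∈ interior (Up F) := by
  obtain ⟨m, hm⟩ : ∃ m, m = al p z / (2 * (z.2.1 - p.2.1)) := ⟨_, rfl⟩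
  have hm' : m * (2 * (z.2.1 - p.2.1)) = al p z := by rw [hm]; field_simp
  simp only [al] at hm'
  have := up_step hF (up_step hF (up_step hF hp ((z.1 - p.1 - m) / 2) 0) 0 (z.2.1 - p.2.1))
    ((z.1 - p.1 + m) / 2) 0
  convert this using 1
  apply P3.ext
  · simp only [mv]; ring
  · simp only [mv]; ring
  · simp only [mv]; linear_combination -hm'

theorem up_univ {F : Set P4} (hF : Mono4 F) {p : P3} (hp : p ∈ interior (Up F)) (z : P3) :
    z ∈ Up F := by
  apply interior_subset
  by_cases hy : z.2.1 - p.2.1 = 0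
  · refine up_reach hF (up_step hF hp 0 1) z ?_
    simp only [mv]
    intro h; linarith
  · exact up_reach hF hp z hy

theorem up_f {F : Set P4} (hF : Mono4 F) {p : P3} (hp : p ∈ Up F) :
    ∃ f : ℝ, (∀ u, f < u → (p, u) ∈ F) ∧ (∀ u, u < f → (p, u) ∉ F) := by
  obtain ⟨N, hN⟩ := hp.1
  obtain ⟨M, hM⟩ := hp.2
  set S := {u : ℝ | (p, u) ∈ F} with hS
  have hne : S.Nonempty := ⟨N + 1, hN _ (by linarith)⟩
  have hbd : BddBelow S := ⟨M, fun u hu => by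
    by_contra h
    exact hM u (by linarith) hu⟩
  refine ⟨sInf S, fun u hu => ?_, fun u hu => notMem_of_lt_csInf (s := S) hu hbd⟩
  obtain ⟨w, hw, hwu⟩ := exists_lt_of_csInf_lt hne hu
  exact hF.1.fib (v := max N u + 1) hw (hN _ (by linarith [le_max_left N u])) hwu.le
    (by linarith [le_max_right N u])

theorem f_aff1 {F : Set P4} (hF : Mono4 F) {f : P3 → ℝ}
    (h1 : ∀ p u, f p < u → (p, u) ∈ F) (h2 : ∀ p u, u < f p → (p, u) ∉ F)
    {p q : P3} (hal : al p q = 0) {s : ℝ} (h0 : 0 ≤ s) (hs : s ≤ 1) :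
    f (pt p q s) = f p + s * (f q - f p) := by
  apply le_antisymm
  · apply le_of_forall_pos_le_add
    intro ε hε
    by_contra hc
    have := hF.1 p q (f p + ε) (f q + ε) (h1 _ _ (by linarith)) (h1 _ _ (by linarith)) hal s h0 hs
    refine h2 _ _ ?_ this
    linarith
  · apply le_of_forall_pos_le_add
    intro ε hε
    by_contra hc
    have := hF.2 p q (f p - ε) (f q - ε) (h2 _ _ (by linarith)) (h2 _ _ (by linarith)) hal s h0 hs
    refine this (h1 _ _ ?_)
    linarith

theorem f_aff {F : Set P4} (hF : Mono4 F) {f : P3 → ℝ}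
    (h1 : ∀ p u, f p < u → (p, u) ∈ F) (h2 : ∀ p u, u < f p → (p, u) ∉ F)
    {p q : P3} (hal : al p q = 0) (s : ℝ) :
    f (pt p q s) = f p + s * (f q - f p) := by
  have out : ∀ {p q : P3}, al p q = 0 → ∀ {s : ℝ}, 1 < s →
      f (pt p q s) = f p + s * (f q - f p) := by
    intro p q hal s hs
    have hs0 : 0 < s := by linarith
    have := f_aff1 hF h1 h2 (p := p) (q := pt p q s)
      (by have := al_pt p q 0 s; rw [pt_zero, hal, mul_zero] at this; exact this) (s := 1 / s)
      (by positivity) (by rw [div_le_one hs0]; exact hs.le)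
    have e : pt p (pt p q s) (1 / s) = q := by
      apply P3.ext <;> simp only [pt] <;> field_simp <;> ring
    rw [e] at this
    rw [this]; field_simp; ring
  rcases lt_or_ge 1 s with hs | hs
  · exact out hal hs
  rcases lt_or_ge s 0 with h0 | h0
  · have := out (al_symm hal) (s := 1 - s) (by linarith)
    have e : pt q p (1 - s) = pt p q s := by
      apply P3.ext <;> simp only [pt] <;> ring
    rw [e] at this
    rw [this]; ring
  · exact f_aff1 hF h1 h2 hal h0 hs

theorem aff_global {f : P3 → ℝ}
    (hf : ∀ p q : P3, al p q = 0 → ∀ s : ℝ, f (pt p q s) = f p + s * (f q - f p)) :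
    ∃ α β γ δ : ℝ, ∀ p : P3, f p = α * p.1 + β * p.2.1 + γ * p.2.2 + δ := by
  have hm : ∀ (p : P3) (a b s : ℝ), f (mv p (s * a) (s * b)) = f p + s * (f (mv p a b) - f p) := by
    intro p a b s
    rw [← pt_mv]; exact hf _ _ (al_mv ..) s
  obtain ⟨h, hh⟩ : ∃ h : ℝ → ℝ, ∀ t, h t = f (0, 0, t) := ⟨_, fun _ => rfl⟩
  obtain ⟨k, hk⟩ : ∃ k : ℝ → ℝ, ∀ t, k t = f (1, 0, t) - f (0, 0, t) := ⟨_, fun _ => rfl⟩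
  obtain ⟨l, hl⟩ : ∃ l : ℝ → ℝ, ∀ t, l t = f (0, 1, t) - f (0, 0, t) := ⟨_, fun _ => rfl⟩
  have fx : ∀ x t : ℝ, f (x, 0, t) = h t + x * k t := by
    intro x t
    have := hm (0, 0, t) 1 0 x
    rw [hh, hk]
    have e1 : mv (0, 0, t) (x * 1) (x * 0) = (x, 0, t) := by
      apply P3.ext <;> simp only [mv] <;> ring
    have e2 : mv (0, 0, t) 1 0 = (1, 0, t) := by
      apply P3.ext <;> simp only [mv] <;> ring
    rw [e1, e2] at this
    exact this
  have fy : ∀ y t : ℝ, f (0, y, t) = h t + y * l t := by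
    intro y t
    have := hm (0, 0, t) 0 1 y
    rw [hh, hl]
    have e1 : mv (0, 0, t) (y * 0) (y * 1) = (0, y, t) := by
      apply P3.ext <;> simp only [mv] <;> ring
    have e2 : mv (0, 0, t) 0 1 = (0, 1, t) := by
      apply P3.ext <;> simp only [mv] <;> ring
    rw [e1, e2] at this
    exact this
  have mid : ∀ x y T : ℝ, f (x / 2, y / 2, T)
      = (h (T + x * y) + x * k (T + x * y) + h (T - x * y) + y * l (T - x * y)) / 2 := by
    intro x y T
    have := hf (x, 0, T + x * y) (0, y, T - x * y) (by simp only [al]; ring) (1 / 2)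
    rw [fx, fy] at this
    have e : pt (x, 0, T + x * y) (0, y, T - x * y) (1 / 2) = (x / 2, y / 2, T) := by
      apply P3.ext <;> simp only [pt] <;> ring
    rw [e] at this
    rw [this]; ring
  have rad : ∀ x y T r : ℝ, f (r * x / 2, r * y / 2, T)
      = h T + r * (f (x / 2, y / 2, T) - h T) := by
    intro x y T r
    have := hm (0, 0, T) (x / 2) (y / 2) r
    rw [hh]
    have e1 : mv (0, 0, T) (r * (x / 2)) (r * (y / 2)) = (r * x / 2, r * y / 2, T) := by
      apply P3.ext <;> simp only [mv] <;> ring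
    have e2 : mv (0, 0, T) (x / 2) (y / 2) = (x / 2, y / 2, T) := by
      apply P3.ext <;> simp only [mv] <;> ring
    rw [e1, e2] at this
    exact this
  have G : ∀ x y T : ℝ, f (x / 2, y / 2, T) - h T
      = (x * k (T + x * y) + y * l (T - x * y)) / 2 := by
    intro x y T
    have a1 := rad x y T (-1)
    have a2 := mid x y T
    have a3 := mid (-1 * x) (-1 * y) T
    have e : (-1 * x) * (-1 * y) = x * y := by ring
    rw [e] at a3
    linarith
  have G2 : ∀ x y T : ℝ, x * k (T + 4 * (x * y)) + y * l (T - 4 * (x * y))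
      = x * k (T + x * y) + y * l (T - x * y) := by
    intro x y T
    have a1 := rad x y T 2
    have a2 := G x y T
    have a3 := G (2 * x) (2 * y) T
    have e : (2 * x) * (2 * y) = 4 * (x * y) := by ring
    rw [e] at a3
    linarith
  have kc : ∀ A s : ℝ, k (A + 3 * s) = k A := by
    intro A s
    have a1 := G2 1 s (A - s)
    have a2 := G2 2 (s / 2) (A - s)
    have e1 : (1 : ℝ) * s = s := one_mul s
    have e2 : (2 : ℝ) * (s / 2) = s := by ring
    have e3 : A - s + 4 * s = A + 3 * s := by ring
    have e4 : A - s + s = A := by ring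
    rw [e1, e3, e4] at a1
    rw [e2, e3, e4] at a2
    linarith
  have lc : ∀ A s : ℝ, l (A - 3 * s) = l A := by
    intro A s
    have a1 := G2 s 1 (A + s)
    have a2 := G2 (s / 2) 2 (A + s)
    have e1 : s * (1 : ℝ) = s := mul_one s
    have e2 : (s / 2) * (2 : ℝ) = s := by ring
    have e3 : A + s - 4 * s = A - 3 * s := by ring
    have e4 : A + s - s = A := by ring
    rw [e1, e3, e4] at a1
    rw [e2, e3, e4] at a2
    linarith
  have kc' : ∀ A, k A = k 0 := by
    intro A
    rw [← kc 0 (A / 3)]; congr 1; ring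
  have lc' : ∀ A, l A = l 0 := by
    intro A
    rw [← lc 0 (-A / 3)]; congr 1; ring
  have F1 : ∀ x y T : ℝ, f (x, y, T) = h T + k 0 * x + l 0 * y := by
    intro x y T
    have := G (2 * x) (2 * y) T
    rw [kc', lc'] at this
    have e1 : 2 * x / 2 = x := by ring
    have e2 : 2 * y / 2 = y := by ring
    rw [e1, e2] at this
    linarith
  have hlin : ∀ s, h (2 * s) = h 0 + s * (h 2 - h 0) := by
    intro s
    have := hm (0, 1, 0) 1 0 s
    have e1 : mv (0, 1, 0) (s * 1) (s * 0) = (s, 1, 2 * s) := by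
      apply P3.ext <;> simp only [mv] <;> ring
    have e2 : mv (0, 1, 0) 1 0 = (1, 1, 2) := by
      apply P3.ext <;> simp only [mv] <;> ring
    rw [e1, e2, F1, F1, F1] at this
    linarith
  refine ⟨k 0, l 0, (h 2 - h 0) / 2, h 0, ?_⟩
  rintro ⟨x, y, T⟩
  have := hlin (T / 2)
  have e : 2 * (T / 2) = T := by ring
  rw [e] at this
  rw [F1, this]
  ring

theorem caseG {F : Set P4} (hF : Mono4 F) {p : P3} (hp : p ∈ interior (Up F)) :
    ∃ α β γ δ : ℝ, ∀ z : P3, ∀ u : ℝ,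
      (α * z.1 + β * z.2.1 + γ * z.2.2 + δ < u → (z, u) ∈ F) ∧
      (u < α * z.1 + β * z.2.1 + γ * z.2.2 + δ → (z, u) ∉ F) := by
  choose f h1 h2 using fun z => up_f hF (up_univ hF hp z)
  obtain ⟨α, β, γ, δ, h⟩ := aff_global (f := f) (fun p q hal s => f_aff hF h1 h2 hal s)
  refine ⟨α, β, γ, δ, fun z u => ⟨fun hu => h1 z u ?_, fun hu => h2 z u ?_⟩⟩
  · rw [h]; exact hu
  · rw [h]; exact hu

def Half (F : Set P4) : Prop := ∃ n0 n1 n2 m k : ℝ, ¬ (n0 = 0 ∧ n1 = 0 ∧ n2 = 0 ∧ m = 0) ∧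
  ∀ z : P3, ∀ u : ℝ,
    (k < n0 * z.1 + n1 * z.2.1 + n2 * z.2.2 + m * u → (z, u) ∈ F) ∧
    (n0 * z.1 + n1 * z.2.1 + n2 * z.2.2 + m * u < k → (z, u) ∉ F)

theorem half_up {F : Set P4} (hF : Mono4 F) {p : P3} (hp : p ∈ interior (Up F)) : Half F := by
  obtain ⟨α, β, γ, δ, h⟩ := caseG hF hp
  refine ⟨-α, -β, -γ, 1, δ, by norm_num, fun z u => ⟨fun hu => (h z u).1 (by linarith),
    fun hu => (h z u).2 (by linarith)⟩⟩

theorem half_down {F : Set P4} (hF : Mono4 F) {p : P3} (hp : p ∈ interior (Up Fᶜ)) : Half F := by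
  obtain ⟨α, β, γ, δ, h⟩ := caseG hF.compl hp
  refine ⟨α, β, γ, -1, -δ, by norm_num, fun z u => ⟨fun hu => ?_,
    fun hu => (h z u).1 (by linarith)⟩⟩
  by_contra hc
  exact (h z u).2 (by linarith) hc

theorem fib_all {F : Set P4} (hF : HC4 F) {p : P3} (h1 : p ∈ Ep F) (h2 : p ∈ Em F) (u : ℝ) :
    (p, u) ∈ F := by
  obtain ⟨N, hN⟩ := h1
  obtain ⟨M, hM⟩ := h2
  exact hF.fib (hM (min M u - 1) (by linarith [min_le_left M u]))
    (hN (max N u + 1) (by linarith [le_max_left N u])) (by linarith [min_le_right M u])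
    (by linarith [le_max_right N u])

theorem half_pts {n0 n1 n2 : ℝ} (hn : ¬ (n0 = 0 ∧ n1 = 0 ∧ n2 = 0)) (c : ℝ) :
    ∃ z : P3, n0 * z.1 + n1 * z.2.1 + n2 * z.2.2 = c := by
  have : n0 ^ 2 + n1 ^ 2 + n2 ^ 2 ≠ 0 := by
    intro h
    apply hn
    refine ⟨?_, ?_, ?_⟩ <;> apply pow_eq_zero_iff (two_ne_zero) |>.1 <;> nlinarith
  refine ⟨(c / (n0 ^ 2 + n1 ^ 2 + n2 ^ 2) * n0, c / (n0 ^ 2 + n1 ^ 2 + n2 ^ 2) * n1,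
    c / (n0 ^ 2 + n1 ^ 2 + n2 ^ 2) * n2), ?_⟩
  simp only
  field_simp

theorem open_gt (n0 n1 n2 k : ℝ) : IsOpen {z : P3 | k < n0 * z.1 + n1 * z.2.1 + n2 * z.2.2} :=
  isOpen_lt (by fun_prop) (by fun_prop)

theorem open_lt (n0 n1 n2 k : ℝ) : IsOpen {z : P3 | n0 * z.1 + n1 * z.2.1 + n2 * z.2.2 < k} :=
  isOpen_lt (by fun_prop) (by fun_prop)

theorem push_off {n0 n1 n2 k m0 m1 m2 d : ℝ} (hm : ¬ (m0 = 0 ∧ m1 = 0 ∧ m2 = 0)) {z : P3}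
    (hz : k < n0 * z.1 + n1 * z.2.1 + n2 * z.2.2)
    (h : ∀ w : P3, k < n0 * w.1 + n1 * w.2.1 + n2 * w.2.2 →
      ¬ (m0 * w.1 + m1 * w.2.1 + m2 * w.2.2 < d)) :
    d < m0 * z.1 + m1 * z.2.1 + m2 * z.2.2 := by
  obtain ⟨y, hy⟩ := half_pts hm (-1)
  have hc : Continuous (fun e : ℝ => n0 * (z.1 + e * y.1) + n1 * (z.2.1 + e * y.2.1)
    + n2 * (z.2.2 + e * y.2.2)) := by fun_prop
  have hn := (isOpen_lt continuous_const hc).mem_nhds (x := (0 : ℝ)) (by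
    show k < _
    simpa using hz)
  obtain ⟨ε, hε, hb⟩ := Metric.mem_nhds_iff.1 hn
  have h2 : k < _ := hb (a := ε / 2) (by
    rw [Metric.mem_ball, Real.dist_eq, sub_zero, abs_of_pos (by positivity)]; linarith)
  have := h (z.1 + ε / 2 * y.1, z.2.1 + ε / 2 * y.2.1, z.2.2 + ε / 2 * y.2.2) h2
  simp only at this
  have e : m0 * (z.1 + ε / 2 * y.1) + m1 * (z.2.1 + ε / 2 * y.2.1) + m2 * (z.2.2 + ε / 2 * y.2.2)
    = m0 * z.1 + m1 * z.2.1 + m2 * z.2.2 - ε / 2 := by linear_combination ε / 2 * hy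
  rw [e] at this
  linarith

theorem T4a {F : Set P4} (hF : Mono4 F) (h0 : Ep F = ∅) : F = ∅ ∨ Half F := by
  have hp : ∀ z, z ∈ Ep Fᶜ := by
    intro z; rw [Ep_compl hF, h0]; simp
  rcases T3 (Mono_Em hF) with h | h | ⟨n0, n1, n2, k, hn, ha, hb⟩
  · left
    ext ⟨p, u⟩
    simp only [Set.mem_empty_iff_false, iff_false]
    exact fib_all hF.2 (hp p) (by rw [Em_compl hF, h]; simp) u
  · right
    refine half_down hF (p := (0, 0, 0)) ?_
    have : Up Fᶜ = Set.univ := by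
      ext z
      simp only [Up, compl_compl, h, Set.inter_univ, Set.mem_univ, iff_true]
      exact hp z
    rw [this]; simp
  · right
    obtain ⟨z, hz⟩ := half_pts hn (k + 1)
    refine half_down hF (p := z) ?_
    rw [mem_interior]
    refine ⟨_, ?_, open_gt n0 n1 n2 k, ?_⟩
    · intro w hw
      refine ⟨hp w, ?_⟩
      rw [compl_compl]; exact ha w hw
    · show k < _
      linarith

theorem Half.compl {F : Set P4} (h : Half Fᶜ) : Half F := by
  obtain ⟨n0, n1, n2, m, k, hn, h⟩ := h
  refine ⟨-n0, -n1, -n2, -m, -k, ?_, fun z u => ⟨fun hu => ?_, fun hu => ?_⟩⟩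
  · rintro ⟨a, b, c, d⟩
    exact hn ⟨by linarith, by linarith, by linarith, by linarith⟩
  · by_contra hc
    exact (h z u).2 (by linarith) hc
  · exact (h z u).1 (by linarith)

theorem T4 {F : Set P4} (hF : Mono4 F) : F = ∅ ∨ F = Set.univ ∨ Half F := by
  rcases T3 (Mono_Ep hF) with h | h | ⟨n0, n1, n2, k, hn, ha, hb⟩
  · rcases T4a hF h with h | h
    · exact Or.inl h
    · exact Or.inr (Or.inr h)
  · rcases T4a hF.compl (by rw [Ep_compl hF, h]; simp) with h | h
    · exact Or.inr (Or.inl (by simpa using h))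
    · exact Or.inr (Or.inr h.compl)
  right; right
  by_cases hU : ∃ p, p ∈ interior (Up F)
  · obtain ⟨p, hp⟩ := hU; exact half_up hF hp
  by_cases hD : ∃ p, p ∈ interior (Up Fᶜ)
  · obtain ⟨p, hp⟩ := hD; exact half_down hF hp
  have hb' : ∀ z : P3, n0 * z.1 + n1 * z.2.1 + n2 * z.2.2 < k → z ∈ Ep Fᶜ := by
    intro z hz; rw [Ep_compl hF]; exact hb z hz
  rcases T3 (Mono_Em hF) with h | h | ⟨m0, m1, m2, d, hm, hc, hd⟩
  · exfalso
    apply hU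
    obtain ⟨z, hz⟩ := half_pts hn (k + 1)
    refine ⟨z, ?_⟩
    rw [mem_interior]
    refine ⟨_, ?_, open_gt n0 n1 n2 k, ?_⟩
    · intro w hw
      exact ⟨ha w hw, by rw [Em_compl hF, h]; simp⟩
    · show k < _
      linarith
  · exfalso
    apply hD
    obtain ⟨z, hz⟩ := half_pts hn (k - 1)
    refine ⟨z, ?_⟩
    rw [mem_interior]
    refine ⟨_, ?_, open_lt n0 n1 n2 k, ?_⟩
    · intro w hw
      exact ⟨hb' w hw, by rw [compl_compl, h]; simp⟩
    · show _ < k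
      linarith
  have hd' : ∀ z : P3, m0 * z.1 + m1 * z.2.1 + m2 * z.2.2 < d → z ∈ Em Fᶜ := by
    intro z hz; rw [Em_compl hF]; exact hd z hz
  have k1 : ∀ z : P3, k < n0 * z.1 + n1 * z.2.1 + n2 * z.2.2 →
      d < m0 * z.1 + m1 * z.2.1 + m2 * z.2.2 := by
    intro z hz
    refine push_off hm hz (fun w hw hw2 => hU ⟨w, ?_⟩)
    rw [mem_interior]
    exact ⟨_, fun y hy => ⟨ha y hy.1, hd' y hy.2⟩,
      (open_gt n0 n1 n2 k).inter (open_lt m0 m1 m2 d), ⟨hw, hw2⟩⟩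
  have k2 : ∀ z : P3, n0 * z.1 + n1 * z.2.1 + n2 * z.2.2 < k →
      m0 * z.1 + m1 * z.2.1 + m2 * z.2.2 < d := by
    intro z hz
    have := push_off (n0 := -n0) (n1 := -n1) (n2 := -n2) (k := -k) (m0 := -m0) (m1 := -m1)
      (m2 := -m2) (d := -d) (z := z)
      (fun h => hm ⟨by linarith [h.1], by linarith [h.2.1], by linarith [h.2.2]⟩)
      (by linarith) (fun w hw hw2 => hD ⟨w, ?_⟩)
    · linarith
    rw [mem_interior]
    refine ⟨_, fun y hy => ⟨hb' y hy.1, by rw [compl_compl]; exact hc y hy.2⟩,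
      (open_lt n0 n1 n2 k).inter (open_gt m0 m1 m2 d), ⟨?_, ?_⟩⟩
    · show _ < k
      linarith
    · show d < _
      linarith
  refine ⟨n0, n1, n2, 0, k, fun h => hn ⟨h.1, h.2.1, h.2.2.1⟩, fun z u => ⟨fun hu => ?_,
    fun hu => ?_⟩⟩
  · rw [zero_mul, add_zero] at hu
    exact fib_all hF.1 (ha z hu) (hc z (k1 z hu)) u
  · rw [zero_mul, add_zero] at hu
    exact fib_all hF.2 (hb' z hu) (hd' z (k2 z hu)) u

def cv (z : P4) : Fin 4 → ℝ := ![z.1.1, z.1.2.1, z.2, z.1.2.2]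

theorem cv_surj (v : Fin 4 → ℝ) : cv ((v 0, v 1, v 3), v 2) = v := by
  ext i; fin_cases i <;> rfl

theorem HC4_of {C : Set (Fin 4 → ℝ)} (h : HRConvex C) : HC4 (cv ⁻¹' C) := by
  intro p q u v hp hq hal s h0 h1
  have key : ∀ r : ℝ, hmul (cv (p, u)) ![r * (q.1 - p.1), r * (q.2.1 - p.2.1), r * (v - u), 0]
      = cv (pt p q r, u + r * (v - u)) := by
    intro r
    simp only [al] at hal
    ext i
    fin_cases i
    · simp [hmul, cv, pt]
    · simp [hmul, cv, pt]
    · simp [hmul, cv, pt]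
    · simp [hmul, cv, pt]
      linear_combination -r * hal
  have e := key 1
  rw [pt_one] at e
  simp only [one_mul] at e
  have := h (cv (p, u)) hp (q.1 - p.1) (q.2.1 - p.2.1) (v - u)
    (by rw [e, add_sub_cancel]; exact hq) s h0 h1
  rw [key] at this
  exact this

theorem Mono4_of {E : Set (Fin 4 → ℝ)} (h : PreciselyMonotone E) : Mono4 (cv ⁻¹' E) :=
  ⟨HC4_of h.1, HC4_of h.2⟩

theorem int_half {C : Set (Fin 4 → ℝ)} {ν : Fin 4 → ℝ} (hν : ν ≠ 0) {c : ℝ}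
    (h1 : ∀ v : Fin 4 → ℝ, c < ∑ i, v i * ν i → v ∈ C)
    (h2 : ∀ v : Fin 4 → ℝ, ∑ i, v i * ν i < c → v ∉ C) :
    interior C = {v : Fin 4 → ℝ | c < ∑ i, v i * ν i} := by
  apply Set.Subset.antisymm
  · intro v hv
    show c < _
    by_contra hcon
    have hc : Continuous (fun e : ℝ => fun i => v i - e * ν i) := by fun_prop
    have hn := (isOpen_interior.preimage hc).mem_nhds (x := (0 : ℝ)) (by
      show (fun i => v i - 0 * ν i) ∈ interior C
      simpa using hv)
    obtain ⟨ε, hε, hb⟩ := Metric.mem_nhds_iff.1 hn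
    have hm : (ε / 2) ∈ (fun e : ℝ => fun i => v i - e * ν i) ⁻¹' interior C := hb (by
      rw [Metric.mem_ball, Real.dist_eq, sub_zero, abs_of_pos (by positivity)]; linarith)
    have hm' : (fun i => v i - ε / 2 * ν i) ∈ interior C := hm
    refine h2 _ ?_ (interior_subset hm')
    have hpos : 0 < ∑ i, ν i * ν i := by
      obtain ⟨j, hj⟩ := Function.ne_iff.1 hν
      exact Finset.sum_pos' (fun i _ => mul_self_nonneg _)
        ⟨j, Finset.mem_univ j, mul_self_pos.2 hj⟩
    have : ∑ i, (v i - ε / 2 * ν i) * ν i = ∑ i, v i * ν i - ε / 2 * ∑ i, ν i * ν i := by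
      rw [Finset.mul_sum, ← Finset.sum_sub_distrib]
      exact Finset.sum_congr rfl (fun i _ => by ring)
    rw [this]
    have : 0 < ε / 2 * ∑ i, ν i * ν i := by positivity
    linarith
  · apply interior_maximal
    · intro v hv; exact h1 v hv
    · exact isOpen_lt continuous_const (by fun_prop)

/-- **Monotone sets in `ℍ×ℝ`:** the interiors of `E` and of its complement are the
two open half-spaces determined by an affine hyperplane. -/
theorem monotone_interiors_are_halfspaces
    (E : Set (Fin 4 → ℝ)) (hE : PreciselyMonotone E)
    (h1 : E ≠ ∅) (h2 : E ≠ Set.univ) :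
    ∃ ν : Fin 4 → ℝ, ν ≠ 0 ∧ ∃ c : ℝ,
      ((interior E = {v : Fin 4 → ℝ | c < ∑ i, v i * ν i} ∧
        interior Eᶜ = {v : Fin 4 → ℝ | ∑ i, v i * ν i < c}) ∨
       (interior E = {v : Fin 4 → ℝ | ∑ i, v i * ν i < c} ∧
        interior Eᶜ = {v : Fin 4 → ℝ | c < ∑ i, v i * ν i})) := by
  have hs : Function.Surjective cv := fun v => ⟨_, cv_surj v⟩
  rcases T4 (Mono4_of hE) with h | h | ⟨n0, n1, n2, m, k, hn, h⟩
  · exfalso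
    apply h1
    rw [Set.eq_empty_iff_forall_notMem]
    intro v hv
    have : ((v 0, v 1, v 3), v 2) ∈ cv ⁻¹' E := by
      show cv _ ∈ E
      rw [cv_surj]; exact hv
    rw [h] at this
    exact this
  · exfalso
    apply h2
    rw [Set.eq_univ_iff_forall]
    intro v
    have : ((v 0, v 1, v 3), v 2) ∈ cv ⁻¹' E := by rw [h]; trivial
    have : cv _ ∈ E := this
    rwa [cv_surj] at this
  have hsum : ∀ v : Fin 4 → ℝ, ∑ i, v i * (![n0, n1, m, n2] : Fin 4 → ℝ) i
      = n0 * v 0 + n1 * v 1 + n2 * v 3 + m * v 2 := by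
    intro v
    simp [Fin.sum_univ_four]
    ring
  have hν : (![n0, n1, m, n2] : Fin 4 → ℝ) ≠ 0 := by
    intro h0
    exact hn ⟨congrFun h0 0, congrFun h0 1, congrFun h0 3, congrFun h0 2⟩
  have k1 : ∀ v : Fin 4 → ℝ, k < ∑ i, v i * (![n0, n1, m, n2] : Fin 4 → ℝ) i → v ∈ E := by
    intro v hv
    rw [hsum] at hv
    have : cv _ ∈ E := (h (v 0, v 1, v 3) (v 2)).1 hv
    rwa [cv_surj] at this
  have k2 : ∀ v : Fin 4 → ℝ, ∑ i, v i * (![n0, n1, m, n2] : Fin 4 → ℝ) i < k → v ∉ E := by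
    intro v hv
    rw [hsum] at hv
    have : ¬ cv _ ∈ E := (h (v 0, v 1, v 3) (v 2)).2 hv
    rwa [cv_surj] at this
  refine ⟨_, hν, k, Or.inl ⟨int_half hν k1 k2, ?_⟩⟩
  have hν' : (-![n0, n1, m, n2] : Fin 4 → ℝ) ≠ 0 := neg_ne_zero.2 hν
  have hneg : ∀ v : Fin 4 → ℝ, ∑ i, v i * (-![n0, n1, m, n2] : Fin 4 → ℝ) i
      = - ∑ i, v i * (![n0, n1, m, n2] : Fin 4 → ℝ) i := by
    intro v
    rw [← Finset.sum_neg_distrib]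
    exact Finset.sum_congr rfl (fun i _ => by rw [Pi.neg_apply]; ring)
  rw [int_half (C := Eᶜ) hν' (c := -k) (fun v hv => k2 v (by rw [hneg] at hv; linarith))
    (fun v hv hc => hc (k1 v (by rw [hneg] at hv; linarith)))]
  ext v
  show -k < _ ↔ _ < k
  rw [hneg]
  constructor <;> intro h <;> linarith
end
end
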